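/- arXiv:math/0002152 — 2 statements merged into one kernel-verified Lean document; each statement's English description precedes it below -/
import Mathlib

section
/- For p ∈ [1,∞), let ‖f‖_{*,p} be the least constant C₉ such that (μ(2Q)^{-1} ∫_Q |f − m_{Q̃} f|^p dμ)^{1/p} ≤ C₉ for every cube Q, and |m_Q f − m_R f| ≤ C₉·K_{Q,R} for all doubling cubes Q ⊂ R. Then for each p ∈ [1,∞) there is a constant C ≥ 1, depending only on p, d, n, C₀ and β_d, with C^{-1}·‖f‖_* ≤ ‖f‖_{*,p} ≤ C·‖f‖_* for all f ∈ L¹_loc(μ); in particular the spaces RBMO^p(μ), p ∈ [1,∞), all coincide with RBMO(μ). -/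
/-!
Common definitions for formalizing Tolsa, "BMO, H¹, and Calderón–Zygmund
operators for non doubling measures".
-/

open MeasureTheory Metric Set Function
open scoped Classical
open scoped ENNReal NNReal BigOperators

noncomputable section

/-- `ℝ^d` with the Euclidean metric. -/
abbrev Euc (d : ℕ) := EuclideanSpace ℝ (Fin d)

variable {d : ℕ}

/-- The support of a measure: points all of whose balls have positive measure. -/
def measSupp (μ : MeasureTheory.Measure (Euc d)) : Set (Euc d) :=
  {x | ∀ r : ℝ, 0 < r → 0 < μ (Metric.ball x r)}

/-- The growth condition `μ(B(x,r)) ≤ C₀ rⁿ`. -/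
def GrowthBound (μ : MeasureTheory.Measure (Euc d)) (n : ℕ) (C₀ : ℝ) : Prop :=
  ∀ (x : Euc d) (r : ℝ), 0 < r → μ (Metric.ball x r) ≤ ENNReal.ofReal (C₀ * r ^ n)

/-- A (closed, axis-parallel) cube with center in the support of `μ` and positive
side length. -/
structure CubeOf (μ : MeasureTheory.Measure (Euc d)) where
  c : Euc d
  ℓ : ℝ
  ℓ_pos : 0 < ℓ
  c_mem : c ∈ measSupp μ

namespace CubeOf

variable {μ : MeasureTheory.Measure (Euc d)}

/-- The set of points of a cube. -/
def set (Q : CubeOf μ) : Set (Euc d) := {y | ∀ i, |y i - Q.c i| ≤ Q.ℓ / 2}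

/-- The concentric dilation `aQ` of a cube, as a set. -/
def dil (Q : CubeOf μ) (a : ℝ) : Set (Euc d) := {y | ∀ i, |y i - Q.c i| ≤ a * Q.ℓ / 2}

/-- The cube `2^k Q`. -/
def pow2 (Q : CubeOf μ) (k : ℕ) : CubeOf μ :=
  ⟨Q.c, 2 ^ k * Q.ℓ, mul_pos (by positivity) Q.ℓ_pos, Q.c_mem⟩

/-- The cube `6^k Q`. -/
def pow6 (Q : CubeOf μ) (k : ℕ) : CubeOf μ :=
  ⟨Q.c, 6 ^ k * Q.ℓ, mul_pos (by positivity) Q.ℓ_pos, Q.c_mem⟩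

end CubeOf

/-- `(α,β)`-doubling cube: `μ(αQ) ≤ β μ(Q)`. -/
def IsDoubling (μ : MeasureTheory.Measure (Euc d)) (α β : ℝ) (Q : CubeOf μ) : Prop :=
  μ (Q.dil α) ≤ ENNReal.ofReal β * μ Q.set

/-- `N_{Q,R}`: the first integer `k ≥ 1` such that `l(2^k Q) ≥ l(R)`. -/
def NQR {μ : MeasureTheory.Measure (Euc d)} (Q R : CubeOf μ) : ℕ :=
  sInf {k : ℕ | 1 ≤ k ∧ R.ℓ ≤ 2 ^ k * Q.ℓ}

/-- The coefficient `K_{Q,R} = 1 + ∑_{k=1}^{N_{Q,R}} μ(2^k Q)/l(2^k Q)^n`. -/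
def Kcoef {μ : MeasureTheory.Measure (Euc d)} (n : ℕ) (Q R : CubeOf μ) : ℝ :=
  1 + ∑ k ∈ Finset.Icc 1 (NQR Q R), (μ ((Q.pow2 k).set)).toReal / ((2 ^ k * Q.ℓ) ^ n)

/-- The smallest `N ≥ 0` such that `2^N Q` is `(2,βd)`-doubling. -/
def tildeIdx (μ : MeasureTheory.Measure (Euc d)) (βd : ℝ) (Q : CubeOf μ) : ℕ :=
  sInf {N : ℕ | IsDoubling μ 2 βd (Q.pow2 N)}

/-- The cube `Q̃`: the smallest cube `2^N Q`, `N ≥ 0`, which is `(2,βd)`-doubling. -/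
def CubeOf.tilde {μ : MeasureTheory.Measure (Euc d)} (Q : CubeOf μ) (βd : ℝ) : CubeOf μ :=
  Q.pow2 (tildeIdx μ βd Q)

/-- The mean `m_Q f` of `f` over the cube `Q` with respect to `μ`. -/
def mQ (μ : MeasureTheory.Measure (Euc d)) (Q : CubeOf μ) (f : Euc d → ℝ) : ℝ :=
  ⨍ x in Q.set, f x ∂μ

/-- For `μ`-a.e. `x` there are `(2,βd)`-doubling cubes centered at `x` of arbitrarily
small side length. -/
def SmallDoublingAE (μ : MeasureTheory.Measure (Euc d)) (βd : ℝ) : Prop :=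
  ∀ᵐ x ∂μ, ∀ ℓ₀ : ℝ, 0 < ℓ₀ → ∃ Q : CubeOf μ, Q.c = x ∧ Q.ℓ < ℓ₀ ∧ IsDoubling μ 2 βd Q

/-- `C` is an admissible constant in the definition of the `RBMO(μ)` norm of `f`. -/
def RBMOBoundWith (μ : MeasureTheory.Measure (Euc d)) (n : ℕ) (βd : ℝ)
    (f : Euc d → ℝ) (C : ℝ≥0∞) : Prop :=
  (∀ Q : CubeOf μ,
    ∫⁻ x in Q.set, ENNReal.ofReal |f x - mQ μ (Q.tilde βd) f| ∂μ ≤ C * μ (Q.dil 2)) ∧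
  (∀ Q R : CubeOf μ, Q.set ⊆ R.set → IsDoubling μ 2 βd Q → IsDoubling μ 2 βd R →
    ENNReal.ofReal |mQ μ Q f - mQ μ R f| ≤ C * ENNReal.ofReal (Kcoef n Q R))

/-- The `RBMO(μ)` norm `‖f‖_*` (with value `∞` if `f ∉ RBMO(μ)`). -/
def rbmoNorm (μ : MeasureTheory.Measure (Euc d)) (n : ℕ) (βd : ℝ) (f : Euc d → ℝ) : ℝ≥0∞ :=
  sInf {C | RBMOBoundWith μ n βd f C}

/-- The conditions defining `‖f‖_{**,(ρ)}`, for a given family of numbers `fQ`. -/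
def StarStarBoundWith (μ : MeasureTheory.Measure (Euc d)) (n : ℕ) (ρ : ℝ)
    (f : Euc d → ℝ) (fQ : CubeOf μ → ℝ) (C : ℝ≥0∞) : Prop :=
  (∀ Q : CubeOf μ, ∫⁻ x in Q.set, ENNReal.ofReal |f x - fQ Q| ∂μ ≤ C * μ (Q.dil ρ)) ∧
  (∀ Q R : CubeOf μ, Q.set ⊆ R.set →
    ENNReal.ofReal |fQ Q - fQ R| ≤ C * ENNReal.ofReal (Kcoef n Q R))

/-- The norm `‖f‖_{**,(ρ)}`. -/
def starStarNorm (μ : MeasureTheory.Measure (Euc d)) (n : ℕ) (ρ : ℝ) (f : Euc d → ℝ) : ℝ≥0∞ :=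
  sInf {C | ∃ fQ : CubeOf μ → ℝ, StarStarBoundWith μ n ρ f fQ C}

end

noncomputable section

variable {d : ℕ}

/-- The conditions defining the `RBMO^p(μ)` norm. -/
def RBMOpBoundWith (μ : MeasureTheory.Measure (Euc d)) (n : ℕ) (βd : ℝ) (p : ℝ)
    (f : Euc d → ℝ) (C : ℝ≥0∞) : Prop :=
  (∀ Q : CubeOf μ,
    ∫⁻ x in Q.set, ENNReal.ofReal |f x - mQ μ (Q.tilde βd) f| ^ p ∂μ ≤ C ^ p * μ (Q.dil 2)) ∧
  (∀ Q R : CubeOf μ, Q.set ⊆ R.set → IsDoubling μ 2 βd Q → IsDoubling μ 2 βd R →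
    ENNReal.ofReal |mQ μ Q f - mQ μ R f| ≤ C * ENNReal.ofReal (Kcoef n Q R))

/-- The `RBMO^p(μ)` norm `‖f‖_{*,p}`. -/
def rbmoPNorm (μ : MeasureTheory.Measure (Euc d)) (n : ℕ) (βd : ℝ) (p : ℝ)
    (f : Euc d → ℝ) : ℝ≥0∞ :=
  sInf {C | RBMOpBoundWith μ n βd p f C}

/-- Condition (b) of Lemma `fifi` of the paper, with constant `Cb`. -/
def CondB (μ : MeasureTheory.Measure (Euc d)) (n : ℕ) (ρ : ℝ)
    (f : Euc d → ℝ) (Cb : ℝ≥0∞) : Prop :=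
  (∀ Q : CubeOf μ, ∫⁻ x in Q.set, ENNReal.ofReal |f x - mQ μ Q f| ∂μ ≤ Cb * μ (Q.dil ρ)) ∧
  (∀ Q R : CubeOf μ, Q.set ⊆ R.set →
    ENNReal.ofReal |mQ μ Q f - mQ μ R f| ≤
      Cb * ENNReal.ofReal (Kcoef n Q R) * (μ (Q.dil ρ) / μ Q.set + μ (R.dil ρ) / μ R.set))

/-- Condition (c) of Lemma `fifi` of the paper, with constant `Cc`. -/
def CondC (μ : MeasureTheory.Measure (Euc d)) (n : ℕ) (βd : ℝ)
    (f : Euc d → ℝ) (Cc : ℝ≥0∞) : Prop :=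
  (∀ Q : CubeOf μ, IsDoubling μ 2 βd Q →
    ∫⁻ x in Q.set, ENNReal.ofReal |f x - mQ μ Q f| ∂μ ≤ Cc * μ Q.set) ∧
  (∀ Q R : CubeOf μ, Q.set ⊆ R.set → IsDoubling μ 2 βd Q → IsDoubling μ 2 βd R →
    ENNReal.ofReal |mQ μ Q f - mQ μ R f| ≤ Cc * ENNReal.ofReal (Kcoef n Q R))

/-- The conditions defining the norm `‖f‖_∘`, relative to a choice `αQ` of minimizers. -/
def CircBoundWith (μ : MeasureTheory.Measure (Euc d)) (n : ℕ) (βd : ℝ)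
    (f : Euc d → ℝ) (αQ : CubeOf μ → ℝ) (C : ℝ≥0∞) : Prop :=
  (∀ Q : CubeOf μ,
    ∫⁻ x in Q.set, ENNReal.ofReal |f x - αQ (Q.tilde βd)| ∂μ ≤ C * μ (Q.dil 2)) ∧
  (∀ Q R : CubeOf μ, Q.set ⊆ R.set → IsDoubling μ 2 βd Q → IsDoubling μ 2 βd R →
    ENNReal.ofReal |αQ Q - αQ R| ≤ C * ENNReal.ofReal (Kcoef n Q R))

/-- The norm `‖f‖_∘`, relative to a choice `αQ` of minimizers. -/
def circNorm (μ : MeasureTheory.Measure (Euc d)) (n : ℕ) (βd : ℝ)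
    (f : Euc d → ℝ) (αQ : CubeOf μ → ℝ) : ℝ≥0∞ :=
  sInf {C | CircBoundWith μ n βd f αQ C}

/-- An atomic block: a function supported on a cube `R`, with zero integral, of the
form `b = ∑ λⱼ aⱼ` with `aⱼ` supported on cubes `Qⱼ ⊆ R` and
`‖aⱼ‖_{L∞(μ)} ≤ (μ(2Qⱼ) K_{Qⱼ,R})⁻¹`. -/
structure AtomicBlock (μ : MeasureTheory.Measure (Euc d)) (n : ℕ) where
  b : Euc d → ℝ
  R : CubeOf μ
  lam : ℕ → ℝ
  a : ℕ → Euc d → ℝ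
  Qj : ℕ → CubeOf μ
  integrable : MeasureTheory.Integrable b μ
  supp_b : ∀ x ∉ R.set, b x = 0
  int_zero : ∫ x, b x ∂μ = 0
  Qj_sub : ∀ j, (Qj j).set ⊆ R.set
  a_supp : ∀ j, ∀ x ∉ (Qj j).set, a j x = 0
  a_meas : ∀ j, MeasureTheory.AEStronglyMeasurable (a j) μ
  a_bound : ∀ j, MeasureTheory.eLpNorm (a j) ⊤ μ ≤
    (μ ((Qj j).dil 2) * ENNReal.ofReal (Kcoef n (Qj j) R))⁻¹
  lam_summable : Summable fun j => |lam j|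
  b_eq : ∀ᵐ x ∂μ, HasSum (fun j => lam j * a j x) (b x)

/-- `|b|_{H^{1,∞}_atb(μ)} = ∑ⱼ |λⱼ|` for the given decomposition. -/
def AtomicBlock.size {μ : MeasureTheory.Measure (Euc d)} {n : ℕ}
    (B : AtomicBlock μ n) : ℝ :=
  ∑' j, |B.lam j|

/-- The `H^{1,∞}_atb(μ)` norm (with value `∞` outside the space). -/
def hatbNorm (μ : MeasureTheory.Measure (Euc d)) (n : ℕ) (f : Euc d → ℝ) : ℝ≥0∞ :=
  sInf {t : ℝ≥0∞ | ∃ B : ℕ → AtomicBlock μ n,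
    (∀ᵐ x ∂μ, HasSum (fun i => (B i).b x) (f x)) ∧
    t = ∑' i, ENNReal.ofReal ((B i).size)}

/-- A `p`-atomic block: like an atomic block, but with the size condition
`‖aⱼ‖_{L^p(μ)} ≤ μ(2Qⱼ)^{1/p-1} K_{Qⱼ,R}⁻¹`. -/
structure PAtomicBlock (μ : MeasureTheory.Measure (Euc d)) (n : ℕ) (p : ℝ) where
  b : Euc d → ℝ
  R : CubeOf μ
  lam : ℕ → ℝ
  a : ℕ → Euc d → ℝ
  Qj : ℕ → CubeOf μ
  integrable : MeasureTheory.Integrable b μ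
  supp_b : ∀ x ∉ R.set, b x = 0
  int_zero : ∫ x, b x ∂μ = 0
  Qj_sub : ∀ j, (Qj j).set ⊆ R.set
  a_supp : ∀ j, ∀ x ∉ (Qj j).set, a j x = 0
  a_meas : ∀ j, MeasureTheory.AEStronglyMeasurable (a j) μ
  a_bound : ∀ j, MeasureTheory.eLpNorm (a j) (ENNReal.ofReal p) μ ≤
    μ ((Qj j).dil 2) ^ (1 / p - 1) * (ENNReal.ofReal (Kcoef n (Qj j) R))⁻¹
  lam_summable : Summable fun j => |lam j|
  b_eq : ∀ᵐ x ∂μ, HasSum (fun j => lam j * a j x) (b x)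

/-- `|b|_{H^{1,p}_atb(μ)} = ∑ⱼ |λⱼ|` for the given decomposition. -/
def PAtomicBlock.size {μ : MeasureTheory.Measure (Euc d)} {n : ℕ} {p : ℝ}
    (B : PAtomicBlock μ n p) : ℝ :=
  ∑' j, |B.lam j|

/-- The `H^{1,p}_atb(μ)` norm (with value `∞` outside the space). -/
def hatbPNorm (μ : MeasureTheory.Measure (Euc d)) (n : ℕ) (p : ℝ) (f : Euc d → ℝ) : ℝ≥0∞ :=
  sInf {t : ℝ≥0∞ | ∃ B : ℕ → PAtomicBlock μ n p,
    (∀ᵐ x ∂μ, HasSum (fun i => (B i).b x) (f x)) ∧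
    t = ∑' i, ENNReal.ofReal ((B i).size)}

/-- A Calderón–Zygmund kernel of dimension `n`, with constant `Ck` and Hölder
exponent `δ`. -/
def CZKernelBound (n : ℕ) (k : Euc d → Euc d → ℝ) (Ck δ : ℝ) : Prop :=
  (∀ x y : Euc d, x ≠ y → |k x y| ≤ Ck / dist x y ^ (n : ℝ)) ∧
  (∀ x x' y : Euc d, x ≠ y → dist x x' ≤ dist x y / 2 →
    |k x y - k x' y| + |k y x - k y x'| ≤ Ck * dist x x' ^ δ / dist x y ^ ((n : ℝ) + δ))

/-- The truncated operator `T_ε f(x) = ∫_{|x-y|>ε} k(x,y) f(y) dμ(y)`. -/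
def trunc (μ : MeasureTheory.Measure (Euc d)) (k : Euc d → Euc d → ℝ) (ε : ℝ)
    (f : Euc d → ℝ) (x : Euc d) : ℝ :=
  ∫ y in {y | ε < dist x y}, k x y * f y ∂μ

/-- The non-centered doubling maximal operator `N`. -/
def Nop (μ : MeasureTheory.Measure (Euc d)) (βd : ℝ) (f : Euc d → ℝ) (x : Euc d) : ℝ≥0∞ :=
  ⨆ (Q : CubeOf μ) (_ : x ∈ Q.set) (_ : IsDoubling μ 2 βd Q),
    (∫⁻ y in Q.set, ENNReal.ofReal |f y| ∂μ) / μ Q.set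

/-- The sharp maximal operator `M^♯`. -/
def Msharp (μ : MeasureTheory.Measure (Euc d)) (n : ℕ) (βd : ℝ)
    (f : Euc d → ℝ) (x : Euc d) : ℝ≥0∞ :=
  (⨆ (Q : CubeOf μ) (_ : x ∈ Q.set),
    (∫⁻ y in Q.set, ENNReal.ofReal |f y - mQ μ (Q.tilde βd) f| ∂μ) / μ (Q.dil (3/2))) +
  ⨆ (Q : CubeOf μ) (R : CubeOf μ) (_ : x ∈ Q.set) (_ : Q.set ⊆ R.set)
      (_ : IsDoubling μ 2 βd Q) (_ : IsDoubling μ 2 βd R),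
    ENNReal.ofReal (|mQ μ Q f - mQ μ R f| / Kcoef n Q R)

/-- The weight functions `w_i = χ_{Q_i} / ∑_k χ_{Q_k}` of the Calderón–Zygmund
decomposition. -/
def czWeight {μ : MeasureTheory.Measure (Euc d)} (J : Finset ℕ) (Q : ℕ → CubeOf μ)
    (i : ℕ) (x : Euc d) : ℝ :=
  Set.indicator (Q i).set
    (fun y => (((J.filter fun kk => y ∈ (Q kk).set).card : ℝ))⁻¹) x

/-- The smallest `(6,6^{n+1})`-doubling cube of the form `6^k Q`, `k ≥ 1`. -/
def smallest6Doubling (μ : MeasureTheory.Measure (Euc d)) (n : ℕ) (Q : CubeOf μ) : CubeOf μ :=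
  Q.pow6 (sInf {k : ℕ | 1 ≤ k ∧ IsDoubling μ 6 (6 ^ (n + 1)) (Q.pow6 k)})

end

section helpers

variable {d : ℕ}

/-- box with center `x` and side `l` -/
def box (x : Euc d) (l : ℝ) : Set (Euc d) := {y | ∀ i, |y i - x i| ≤ l / 2}

lemma box_isClosed (x : Euc d) (l : ℝ) : IsClosed (box x l) := by
  have : box x l = ⋂ i, {y : Euc d | |y i - x i| ≤ l / 2} := by
    ext y; simp [box]
  rw [this]
  refine isClosed_iInter fun i => isClosed_le ?_ continuous_const
  fun_prop

lemma box_meas (x : Euc d) (l : ℝ) : MeasurableSet (box x l) := (box_isClosed x l).measurableSet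

lemma box_subset {x y : Euc d} {l l' s : ℝ} (h : ∀ i, |x i - y i| ≤ s)
    (hs : l' / 2 + s ≤ l / 2) : box y l' ⊆ box x l := by
  intro z hz i
  have h1 := hz i
  have h2 := h i
  rw [abs_le] at *
  constructor <;> linarith [h1.1, h1.2, h2.1, h2.2]

lemma box_mono {x : Euc d} {l l' : ℝ} (h : l' ≤ l) : box x l' ⊆ box x l :=
  box_subset (s := 0) (by simp) (by linarith)

lemma box_subset_ball (x : Euc d) {l : ℝ} (hl : 0 < l) :
    box x l ⊆ Metric.ball x ((d + 1) * l) := by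
  intro y hy
  rw [Metric.mem_ball, EuclideanSpace.dist_eq]
  have hd : (0 : ℝ) ≤ d := Nat.cast_nonneg d
  rw [Real.sqrt_lt' (by positivity)]
  have : ∑ i, dist (y i) (x i) ^ 2 ≤ ∑ i : Fin d, (l / 2) ^ 2 := by
    refine Finset.sum_le_sum fun i _ => ?_
    rw [Real.dist_eq]
    exact pow_le_pow_left₀ (abs_nonneg _) (hy i) 2
  refine this.trans_lt ?_
  simp
  have : (0 : ℝ) < l ^ 2 := by positivity
  nlinarith

lemma ball_subset_box (x : Euc d) {l : ℝ} : Metric.ball x (l / 2) ⊆ box x l := by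
  intro y hy i
  rw [Metric.mem_ball, EuclideanSpace.dist_eq] at hy
  refine le_trans ?_ hy.le
  refine Real.le_sqrt_of_sq_le ?_
  rw [← Real.dist_eq]
  exact Finset.single_le_sum (f := fun i => dist (y i) (x i) ^ 2) (fun i _ => by positivity)
    (Finset.mem_univ i)

variable {μ : Measure (Euc d)} {n : ℕ} {C₀ : ℝ}

lemma box_le (hg : GrowthBound μ n C₀) (x : Euc d) {l : ℝ} (hl : 0 < l) :
    μ (box x l) ≤ ENNReal.ofReal (C₀ * ((d + 1) * l) ^ n) :=
  (measure_mono (box_subset_ball x hl)).trans (hg x _ (by positivity))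

lemma box_lt_top (hg : GrowthBound μ n C₀) (x : Euc d) {l : ℝ} (hl : 0 < l) :
    μ (box x l) < ⊤ := (box_le hg x hl).trans_lt ENNReal.ofReal_lt_top

lemma box_pos {x : Euc d} (hx : x ∈ measSupp μ) {l : ℝ} (hl : 0 < l) : 0 < μ (box x l) :=
  (hx (l / 2) (by positivity)).trans_le (measure_mono (ball_subset_box x))

/-- density -/
noncomputable def dens (μ : Measure (Euc d)) (n : ℕ) (x : Euc d) (l : ℝ) : ℝ :=
  (μ (box x l)).toReal / l ^ n

lemma dens_nonneg (x : Euc d) {l : ℝ} (hl : 0 < l) : 0 ≤ dens μ n x l := by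
  unfold dens; positivity

lemma dens_le (hC₀ : 0 < C₀) (hg : GrowthBound μ n C₀) (x : Euc d) {l : ℝ} (hl : 0 < l) :
    dens μ n x l ≤ C₀ * (d + 1) ^ n := by
  unfold dens
  rw [div_le_iff₀ (by positivity)]
  refine ENNReal.toReal_le_of_le_ofReal (by positivity) ((box_le hg x hl).trans_eq ?_)
  rw [mul_pow, mul_assoc]

lemma dens_compare (hg : GrowthBound μ n C₀) {x y : Euc d} {l l' : ℝ} (hl : 0 < l)
    (hl' : 0 < l') (hsub : box y l' ⊆ box x l) (h16 : l ≤ 16 * l') :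
    dens μ n y l' ≤ 16 ^ n * dens μ n x l := by
  unfold dens
  rw [div_le_iff₀ (by positivity)]
  have h1 : (μ (box y l')).toReal ≤ (μ (box x l)).toReal :=
    ENNReal.toReal_mono (box_lt_top hg x hl).ne (measure_mono hsub)
  have h2 : l ^ n ≤ 16 ^ n * l' ^ n := by
    rw [← mul_pow]; exact pow_le_pow_left₀ hl.le h16 n
  refine h1.trans ?_
  have h3 : 1 ≤ 16 ^ n * l' ^ n / l ^ n := by
    rw [le_div_iff₀ (by positivity)]; linarith
  calc (μ (box x l)).toReal ≤ (μ (box x l)).toReal * (16 ^ n * l' ^ n / l ^ n) :=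
        le_mul_of_one_le_right ENNReal.toReal_nonneg h3
    _ = _ := by ring

lemma geom_aux {u : ℕ → ℝ} {r M : ℝ} (hr0 : 0 < r) (hu : ∀ k, 0 ≤ u k) (hr : r < 1) (hM : ∀ k, u k ≤ M)
    (N : ℕ) (h : ∀ k < N, u k ≤ r * u (k + 1)) :
    ∑ k ∈ Finset.range (N + 1), u k ≤ M / (1 - r) := by
  have h1 : 0 < 1 - r := by linarith
  have key : ∀ N : ℕ, (∀ k < N, u k ≤ r * u (k + 1)) →
      (∑ k ∈ Finset.range (N + 1), u k) * (1 - r) ≤ u N := by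
    intro N
    induction N with
    | zero =>
      intro h
      simp only [zero_add, Finset.sum_range_one]
      nlinarith [hu 0]
    | succ N ih =>
      intro h
      have h2 := ih fun k hk => h k (by omega)
      have h3 := h N (by omega)
      rw [Finset.sum_range_succ, add_mul]
      linarith
  rw [le_div_iff₀ h1]
  exact (key N h).trans (hM N)

end helpers
section helpers2

variable {d : ℕ} {μ : Measure (Euc d)} {n : ℕ} {C₀ βd : ℝ}

lemma pow2_pow2 (Q : CubeOf μ) (m k : ℕ) : (Q.pow2 m).pow2 k = Q.pow2 (m + k) := by
  unfold CubeOf.pow2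
  congr 1
  simp only
  ring

lemma pow2_zero' (Q : CubeOf μ) : Q.pow2 0 = Q := by
  cases Q
  simp [CubeOf.pow2]

lemma set_eq_box (Q : CubeOf μ) : Q.set = box Q.c Q.ℓ := rfl
lemma dil_eq_box (Q : CubeOf μ) (a : ℝ) : Q.dil a = box Q.c (a * Q.ℓ) := rfl
lemma pow2_c (Q : CubeOf μ) (k : ℕ) : (Q.pow2 k).c = Q.c := rfl
lemma pow2_l (Q : CubeOf μ) (k : ℕ) : (Q.pow2 k).ℓ = 2 ^ k * Q.ℓ := rfl

/-- the densities along the dyadic dilations -/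
noncomputable def uu (n : ℕ) (Q : CubeOf μ) (k : ℕ) : ℝ := dens μ n Q.c (2 ^ k * Q.ℓ)

lemma uu_nonneg (Q : CubeOf μ) (k : ℕ) : 0 ≤ uu n Q k :=
  dens_nonneg _ (mul_pos (by positivity) Q.ℓ_pos)

lemma uu_le (hC₀ : 0 < C₀) (hg : GrowthBound μ n C₀) (Q : CubeOf μ) (k : ℕ) :
    uu n Q k ≤ C₀ * (d + 1) ^ n :=
  dens_le hC₀ hg _ (mul_pos (by positivity) Q.ℓ_pos)

lemma uu_shift (Q : CubeOf μ) (m k : ℕ) : uu n (Q.pow2 m) k = uu n Q (m + k) := by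
  unfold uu
  rw [pow2_c, pow2_l, pow_add]
  congr 1; ring

lemma uu_zero_pos (hg : GrowthBound μ n C₀) (Q : CubeOf μ) : 0 < uu n Q 0 := by
  unfold uu dens
  have := Q.ℓ_pos
  simp only [pow_zero, one_mul]
  exact div_pos (ENNReal.toReal_pos (box_pos Q.c_mem Q.ℓ_pos).ne' (box_lt_top hg _ Q.ℓ_pos).ne)
    (by positivity)

lemma uu_step (hβ : (2 : ℝ) ^ n < βd) (hg : GrowthBound μ n C₀) (Q : CubeOf μ) (k : ℕ)
    (h : ¬ IsDoubling μ 2 βd (Q.pow2 k)) : uu n Q k ≤ 2 ^ n / βd * uu n Q (k + 1) := by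
  have hb : 0 < βd := lt_trans (by positivity) hβ
  have hl := Q.ℓ_pos
  unfold IsDoubling at h
  rw [not_le, dil_eq_box, set_eq_box, pow2_c, pow2_l] at h
  have e : (2 : ℝ) * (2 ^ k * Q.ℓ) = 2 ^ (k + 1) * Q.ℓ := by ring
  rw [e] at h
  have h1 := ENNReal.toReal_mono (box_lt_top hg _ (by positivity)).ne h.le
  rw [ENNReal.toReal_mul, ENNReal.toReal_ofReal hb.le] at h1
  unfold uu dens
  rw [div_mul_div_comm, div_le_div_iff₀ (by positivity) (by positivity)]
  have e2 : (2 ^ (k + 1) * Q.ℓ) ^ n = 2 ^ n * (2 ^ k * Q.ℓ) ^ n := by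
    rw [← mul_pow]; congr 1; ring
  rw [e2]
  have : 0 ≤ (2 : ℝ) ^ n * (2 ^ k * Q.ℓ) ^ n := by positivity
  nlinarith [mul_le_mul_of_nonneg_right h1 this]

lemma exists_doubling (hC₀ : 0 < C₀) (hβ : (2 : ℝ) ^ n < βd) (hg : GrowthBound μ n C₀)
    (Q : CubeOf μ) : ∃ N : ℕ, IsDoubling μ 2 βd (Q.pow2 N) := by
  by_contra! hcon
  have hb : 0 < βd := lt_trans (by positivity) hβ
  have hr1 : 2 ^ n / βd < 1 := by rw [div_lt_one hb]; exact hβ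
  have hr0 : 0 < 2 ^ n / βd := by positivity
  set r := 2 ^ n / βd
  have key : ∀ k, uu n Q 0 ≤ r ^ k * uu n Q k := by
    intro k
    induction k with
    | zero => simp
    | succ k ih =>
      have := uu_step hβ hg Q k (hcon k)
      calc _ ≤ _ := ih
        _ ≤ r ^ k * (r * uu n Q (k + 1)) := by gcongr
        _ = _ := by ring
  have hlim : Filter.Tendsto (fun k : ℕ => r ^ k * (C₀ * (d + 1) ^ n)) Filter.atTop (nhds 0) := by
    simpa using (tendsto_pow_atTop_nhds_zero_of_lt_one hr0.le hr1).mul_const (C₀ * (d + 1) ^ n)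
  have : uu n Q 0 ≤ 0 := ge_of_tendsto' hlim fun k =>
    (key k).trans (by gcongr; exact uu_le hC₀ hg Q k)
  exact absurd (uu_zero_pos hg Q) (not_lt.2 this)

lemma tilde_doubling (hC₀ : 0 < C₀) (hβ : (2 : ℝ) ^ n < βd) (hg : GrowthBound μ n C₀)
    (Q : CubeOf μ) : IsDoubling μ 2 βd (Q.pow2 (tildeIdx μ βd Q)) :=
  Nat.sInf_mem (s := {N : ℕ | IsDoubling μ 2 βd (Q.pow2 N)}) (exists_doubling hC₀ hβ hg Q)

lemma tildeIdx_le {Q : CubeOf μ} {N : ℕ} (h : IsDoubling μ 2 βd (Q.pow2 N)) :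
    tildeIdx μ βd Q ≤ N := Nat.sInf_le h

lemma tilde_of_doubling {Q : CubeOf μ} (h : IsDoubling μ 2 βd Q) : Q.tilde βd = Q := by
  have : tildeIdx μ βd Q = 0 := by
    have := tildeIdx_le (Q := Q) (N := 0) (by rwa [pow2_zero'])
    omega
  rw [CubeOf.tilde, this, pow2_zero']

lemma uu_tilde_sum (hC₀ : 0 < C₀) (hβ : (2 : ℝ) ^ n < βd) (hg : GrowthBound μ n C₀)
    (Q : CubeOf μ) : ∑ k ∈ Finset.range (tildeIdx μ βd Q + 1), uu n Q k ≤
      C₀ * (d + 1) ^ n / (1 - 2 ^ n / βd) := by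
  have hb : 0 < βd := lt_trans (by positivity) hβ
  refine geom_aux (by positivity) (uu_nonneg Q) (by rw [div_lt_one hb]; exact hβ) (uu_le hC₀ hg Q) _
    fun k hk => uu_step hβ hg Q k fun hd => ?_
  have := tildeIdx_le hd
  omega

lemma Kcoef_le (P R : CubeOf μ) (N k0 : ℕ) (hk : N < k0) (hR : R.ℓ ≤ 2 ^ k0 * P.ℓ) :
    Kcoef n (P.pow2 N) R ≤ 1 + ∑ j ∈ Finset.range (k0 + 1), uu n P j := by
  have h1 : NQR (P.pow2 N) R ≤ k0 - N := by
    refine Nat.sInf_le ⟨by omega, ?_⟩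
    rw [pow2_l, ← mul_assoc, ← pow_add]
    rwa [show k0 - N + N = k0 by omega]
  unfold Kcoef
  gcongr
  have : ∀ k, (μ (((P.pow2 N).pow2 k).set)).toReal / ((2 ^ k * (P.pow2 N).ℓ) ^ n)
      = uu n P (N + k) := by
    intro k
    rw [← uu_shift]; rfl
  simp only [this]
  have e := Finset.sum_map (Finset.Icc 1 (NQR (P.pow2 N) R)) (addLeftEmbedding N) (fun j => uu n P j)
  simp only [addLeftEmbedding_apply] at e
  rw [← e]
  refine Finset.sum_le_sum_of_subset_of_nonneg ?_ fun j _ _ => uu_nonneg P j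
  intro j hj
  simp only [Finset.mem_map, Finset.mem_Icc, addLeftEmbedding_apply, Finset.mem_range] at *
  omega

lemma Kcoef_pos (Q R : CubeOf μ) : 0 < Kcoef n Q R := by
  unfold Kcoef
  have : 0 ≤ ∑ k ∈ Finset.Icc 1 (NQR Q R), (μ ((Q.pow2 k).set)).toReal / ((2 ^ k * Q.ℓ) ^ n) :=
    Finset.sum_nonneg fun k _ => by have := Q.ℓ_pos; positivity
  linarith

/-- constant controlling `K_{Q,Q~}` -/
noncomputable def cTil (d n : ℕ) (C₀ βd : ℝ) : ℝ :=
  C₀ * (d + 1) ^ n / (1 - 2 ^ n / βd)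

lemma cTil_nonneg (d : ℕ) (hC₀ : 0 < C₀) (hβ : (2 : ℝ) ^ n < βd) : 0 ≤ cTil d n C₀ βd := by
  have hb : 0 < βd := lt_trans (by positivity) hβ
  have : 2 ^ n / βd < 1 := by rw [div_lt_one hb]; exact hβ
  exact div_nonneg (by positivity) (by linarith)

/-- constant of lemma A -/
noncomputable def cA (d n : ℕ) (C₀ βd : ℝ) (m : ℕ) : ℝ :=
  1 + (m * (C₀ * (d + 1) ^ n) + cTil d n C₀ βd)

lemma cA_nonneg (d : ℕ) (hC₀ : 0 < C₀) (hβ : (2 : ℝ) ^ n < βd) (m : ℕ) :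
    0 ≤ cA d n C₀ βd m := by
  have := cTil_nonneg d hC₀ hβ
  unfold cA; positivity

lemma tilde_sum_shift (hC₀ : 0 < C₀) (hβ : (2 : ℝ) ^ n < βd) (hg : GrowthBound μ n C₀)
    (Q : CubeOf μ) (m : ℕ) :
    ∑ j ∈ Finset.range (m + tildeIdx μ βd (Q.pow2 m) + 1), uu n Q j ≤
      ∑ j ∈ Finset.range m, uu n Q j + cTil d n C₀ βd := by
  rw [add_assoc, Finset.sum_range_add]
  gcongr
  have := uu_tilde_sum hC₀ hβ hg (Q.pow2 m)
  simp only [uu_shift] at this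
  exact this

lemma sum_uu_le (hC₀ : 0 < C₀) (hg : GrowthBound μ n C₀) (Q : CubeOf μ) (s : Finset ℕ) :
    ∑ j ∈ s, uu n Q j ≤ s.card * (C₀ * (d + 1) ^ n) := by
  simpa using Finset.sum_le_card_nsmul s (fun j => uu n Q j) _ fun j _ => uu_le hC₀ hg Q j

lemma pow2_subset (Q : CubeOf μ) {a b : ℕ} (h : a ≤ b) : (Q.pow2 a).set ⊆ (Q.pow2 b).set := by
  rw [set_eq_box, set_eq_box]
  refine box_mono ?_
  rw [pow2_l, pow2_l]
  have := Q.ℓ_pos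
  gcongr
  norm_num

lemma lemA (hC₀ : 0 < C₀) (hβ : (2 : ℝ) ^ n < βd) (hg : GrowthBound μ n C₀)
    {f : Euc d → ℝ} {a : ℝ} (ha : 0 ≤ a)
    (H2 : ∀ Q R : CubeOf μ, Q.set ⊆ R.set → IsDoubling μ 2 βd Q → IsDoubling μ 2 βd R →
      |mQ μ Q f - mQ μ R f| ≤ a * Kcoef n Q R) (Q : CubeOf μ) (m : ℕ) :
    |mQ μ (Q.tilde βd) f - mQ μ ((Q.pow2 m).tilde βd) f| ≤ a * cA d n C₀ βd m := by
  have hN := tilde_doubling hC₀ hβ hg Q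
  have hM := tilde_doubling hC₀ hβ hg (Q.pow2 m)
  set N := tildeIdx μ βd Q with hNd
  set M := tildeIdx μ βd (Q.pow2 m) with hMd
  have e1 : Q.tilde βd = Q.pow2 N := rfl
  have e2 : (Q.pow2 m).tilde βd = Q.pow2 (m + M) := by rw [← pow2_pow2]; rfl
  rw [pow2_pow2] at hM
  have hle : N ≤ m + M := tildeIdx_le hM
  have hA := cA_nonneg d hC₀ hβ m
  rcases le_or_gt m N with h | h
  · have : M ≤ N - m := tildeIdx_le (by rw [pow2_pow2]; rwa [show m + (N - m) = N by omega])
    rw [e1, e2, show m + M = N by omega]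
    simp; positivity
  · rw [e1, e2]
    refine (H2 _ _ (pow2_subset Q hle) hN hM).trans ?_
    gcongr
    refine (Kcoef_le Q _ N (m + M) (by omega) le_rfl).trans ?_
    unfold cA
    gcongr
    refine (tilde_sum_shift hC₀ hβ hg Q m).trans ?_
    gcongr
    simpa using sum_uu_le hC₀ hg Q (Finset.range m)

/-- constant of lemma B -/
noncomputable def cB (d n : ℕ) (C₀ βd : ℝ) : ℝ :=
  cA d n C₀ βd 3 + (1 + 16 ^ n * (6 * (C₀ * (d + 1) ^ n) + 2 * cTil d n C₀ βd))

lemma cB_nonneg (d : ℕ) (hC₀ : 0 < C₀) (hβ : (2 : ℝ) ^ n < βd) :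
    0 ≤ cB d n C₀ βd := by
  have := cTil_nonneg d hC₀ hβ
  have := cA_nonneg d hC₀ hβ 3
  unfold cB; positivity

lemma lemB (hC₀ : 0 < C₀) (hβ : (2 : ℝ) ^ n < βd) (hg : GrowthBound μ n C₀)
    {f : Euc d → ℝ} {a : ℝ} (ha : 0 ≤ a)
    (H2 : ∀ Q R : CubeOf μ, Q.set ⊆ R.set → IsDoubling μ 2 βd Q → IsDoubling μ 2 βd R →
      |mQ μ Q f - mQ μ R f| ≤ a * Kcoef n Q R) (Q R : CubeOf μ)
    (h1 : R.ℓ ≤ 2 * Q.ℓ) (h2 : Q.ℓ ≤ 2 * R.ℓ) (h3 : ∀ i, |Q.c i - R.c i| ≤ Q.ℓ + R.ℓ) :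
    |mQ μ (Q.tilde βd) f - mQ μ (R.tilde βd) f| ≤ a * cB d n C₀ βd := by
  wlog hMN : tildeIdx μ βd R ≤ tildeIdx μ βd Q generalizing Q R
  · rw [abs_sub_comm]
    refine this R Q h2 h1 (fun i => ?_) (by omega)
    rw [abs_sub_comm, add_comm]; exact h3 i
  have hN := tilde_doubling hC₀ hβ hg Q
  have hM := tilde_doubling hC₀ hβ hg R
  set N := tildeIdx μ βd Q with hNd
  set M := tildeIdx μ βd R with hMd
  have e1 : Q.tilde βd = Q.pow2 N := rfl
  have e2 : R.tilde βd = R.pow2 M := rfl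
  have hA := lemA hC₀ hβ hg ha H2 (Q.pow2 N) 3
  rw [tilde_of_doubling hN, pow2_pow2] at hA
  have hJ := tilde_doubling hC₀ hβ hg (Q.pow2 (N + 3))
  set J := tildeIdx μ βd (Q.pow2 (N + 3)) with hJd
  have e3 : (Q.pow2 (N + 3)).tilde βd = Q.pow2 (N + 3 + J) := by
    rw [← pow2_pow2 Q (N + 3) J]; rfl
  rw [pow2_pow2] at hJ
  rw [e3] at hA
  rw [e1, e2]
  have hQ := Q.ℓ_pos
  have hR := R.ℓ_pos
  have hsub : ∀ j, box R.c (2 ^ j * R.ℓ) ⊆ box Q.c (2 ^ (j + 3) * Q.ℓ) := by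
    intro j
    refine box_subset h3 ?_
    have h1j : (1 : ℝ) ≤ 2 ^ j := one_le_pow₀ (by norm_num)
    rw [pow_add]
    nlinarith [mul_le_mul_of_nonneg_left h1 (by positivity : (0:ℝ) ≤ 2 ^ j),
      mul_le_mul_of_nonneg_right h1j hQ.le]
  have hB : |mQ μ (R.pow2 M) f - mQ μ (Q.pow2 (N + 3 + J)) f| ≤
      a * (1 + 16 ^ n * (6 * (C₀ * (d + 1) ^ n) + 2 * cTil d n C₀ βd)) := by
    refine (H2 _ _ ?_ hM hJ).trans ?_
    · exact (hsub M).trans (pow2_subset Q (a := M + 3) (by omega))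
    gcongr
    refine (Kcoef_le R _ M (N + 4 + J) (by omega) ?_).trans ?_
    · rw [pow2_l, show N + 4 + J = N + 3 + J + 1 by ring, pow_succ _ (N + 3 + J), mul_assoc]
      gcongr
    gcongr
    have t1 : ∀ j, uu n R j ≤ 16 ^ n * uu n Q (j + 3) := by
      intro j
      refine dens_compare hg (by positivity) (by positivity) (hsub j) ?_
      rw [pow_add]
      nlinarith [mul_le_mul_of_nonneg_left h2 (by positivity : (0:ℝ) ≤ 2 ^ j)]
    refine (Finset.sum_le_sum fun j _ => t1 j).trans ?_
    rw [← Finset.mul_sum]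
    gcongr
    have t2 : ∑ j ∈ Finset.range (N + 4 + J + 1), uu n Q (j + 3) ≤
        ∑ j ∈ Finset.range ((N + 3 + J + 1) + 4), uu n Q j := by
      rw [show N + 3 + J + 1 + 4 = 3 + (N + 4 + J + 1) by ring,
        Finset.sum_range_add _ 3 (N + 4 + J + 1)]
      have : 0 ≤ ∑ j ∈ Finset.range 3, uu n Q j := Finset.sum_nonneg fun j _ => uu_nonneg Q j
      have e : ∀ j, uu n Q (j + 3) = uu n Q (3 + j) := fun j => by rw [add_comm]
      simp only [e]
      exact le_add_of_nonneg_left this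
    refine t2.trans ?_
    rw [Finset.sum_range_add _ (N + 3 + J + 1) 4]
    have t3 := tilde_sum_shift hC₀ hβ hg Q (N + 3)
    have t4 : ∑ j ∈ Finset.range (N + 3), uu n Q j ≤ cTil d n C₀ βd + 2 * (C₀ * (d + 1) ^ n) := by
      rw [show N + 3 = (N + 1) + 2 by ring, Finset.sum_range_add]
      refine add_le_add (uu_tilde_sum hC₀ hβ hg Q) ?_
      simpa using Finset.sum_le_card_nsmul (Finset.range 2) (fun j => uu n Q (N + 1 + j)) _
        fun j _ => uu_le hC₀ hg Q _
    have t5 : ∑ j ∈ Finset.range 4, uu n Q (N + 3 + J + 1 + j) ≤ 4 * (C₀ * (d + 1) ^ n) := by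
      simpa using Finset.sum_le_card_nsmul (Finset.range 4) (fun j => uu n Q (N + 3 + J + 1 + j)) _
        fun j _ => uu_le hC₀ hg Q _
    linarith
  rw [abs_sub_comm] at hB
  have := abs_sub_le (mQ μ (Q.pow2 N) f) (mQ μ (Q.pow2 (N + 3 + J)) f) (mQ μ (R.pow2 M) f)
  unfold cB
  rw [mul_add]
  linarith

end helpers2
section helpers3

variable {d : ℕ} {μ : Measure (Euc d)} {n : ℕ} {C₀ βd : ℝ}

lemma box_eq_preimage (x : Euc d) {l : ℝ} (hl : 0 ≤ l) :
    box x l = (PiLp.homeomorph 2 (fun _ : Fin d => ℝ)) ⁻¹'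
      Metric.closedBall (PiLp.homeomorph 2 (fun _ : Fin d => ℝ) x) (l / 2) := by
  ext y
  simp only [box, mem_ofPred_eq, mem_preimage, Metric.mem_closedBall]
  rw [dist_pi_le_iff (by positivity)]
  simp only [Real.dist_eq]
  rfl

lemma locFin (hg : GrowthBound μ n C₀) : IsLocallyFiniteMeasure μ :=
  ⟨fun x => ⟨Metric.ball x 1, Metric.ball_mem_nhds x one_pos,
    (hg x 1 one_pos).trans_lt ENNReal.ofReal_lt_top⟩⟩

lemma leb_diff (hg : GrowthBound μ n C₀) {f : Euc d → ℝ} (hf : LocallyIntegrable f μ) :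
    ∀ᵐ x ∂μ, Filter.Tendsto (fun l => ⨍ y in box x l, f y ∂μ) (nhdsWithin 0 (Ioi 0))
      (nhds (f x)) := by
  have := locFin hg
  set e := PiLp.homeomorph 2 (fun _ : Fin d => ℝ) with he
  set ν := μ.map e with hν
  have hem : MeasurePreserving e μ ν := ⟨e.continuous.measurable, rfl⟩
  have : IsLocallyFiniteMeasure ν := by
    refine ⟨fun y => ?_⟩
    obtain ⟨s, hs, hs'⟩ := μ.finiteAt_nhds (e.symm y)
    refine ⟨e '' s, ?_, ?_⟩
    · have := e.isOpenMap.image_mem_nhds hs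
      simpa using this
    · rw [hν, e.measurableEmbedding.map_apply]
      rw [preimage_image_eq _ e.injective]; exact hs'
  have hf' : LocallyIntegrable (f ∘ e.symm) ν := by
    rw [hν, locallyIntegrable_map_homeomorph]
    have : (f ∘ e.symm) ∘ e = f := by funext x; simp
    rw [this]; exact hf
  have h1 := (Besicovitch.vitaliFamily ν).ae_tendsto_average hf'
  have h2 := hem.quasiMeasurePreserving.ae h1
  filter_upwards [h2] with x hx
  have h3 := hx.comp (Besicovitch.tendsto_filterAt ν (e x))
  have h4 : Filter.Tendsto (fun l : ℝ => l / 2) (nhdsWithin 0 (Ioi 0)) (nhdsWithin 0 (Ioi 0)) := by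
    refine tendsto_nhdsWithin_iff.2 ⟨?_, ?_⟩
    · refine Filter.Tendsto.mono_left ?_ nhdsWithin_le_nhds
      have : Continuous fun l : ℝ => l / 2 := by fun_prop
      simpa using this.tendsto 0
    · filter_upwards [self_mem_nhdsWithin] with l hl
      have : (0 : ℝ) < l := hl
      show (0 : ℝ) < l / 2
      positivity
  have h5 := h3.comp h4
  have e5 : (f ∘ e.symm) (e x) = f x := by simp
  rw [e5] at h5
  refine h5.congr' ?_
  filter_upwards [self_mem_nhdsWithin] with l hl
  have hl' : (0 : ℝ) < l := hl
  simp only [Function.comp_apply]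
  rw [box_eq_preimage x hl'.le, setAverage_eq, setAverage_eq]
  have hemb : MeasurableEmbedding e := e.measurableEmbedding
  rw [← hem.setIntegral_preimage_emb hemb]
  rw [measureReal_def, measureReal_def, hem.measure_preimage_emb hemb]
  simp [he]

lemma besic (d : ℕ) : ∃ N : ℕ, ∀ (β : Type) (c : β → Euc d) (l : β → ℝ) (L : ℝ),
    (∀ b, 0 < l b) → (∀ b, l b ≤ L) → ∃ s : Fin N → Set β,
      (∀ i, (s i).PairwiseDisjoint fun j => box (c j) (l j)) ∧ (∀ i, (s i).Countable) ∧
      ∀ b, ∃ i, ∃ j ∈ s i, c b ∈ box (c j) (l j) := by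
  obtain ⟨N, τ, hτ, hN⟩ := HasBesicovitchCovering.no_satelliteConfig (α := Fin d → ℝ)
  refine ⟨N, fun β c l L hpos hle => ?_⟩
  set e := PiLp.homeomorph 2 (fun _ : Fin d => ℝ) with he
  let q : Besicovitch.BallPackage β (Fin d → ℝ) :=
    { c := fun b => e (c b)
      r := fun b => l b / 2
      rpos := fun b => by have := hpos b; positivity
      r_bound := L / 2
      r_le := fun b => by have := hle b; linarith }
  obtain ⟨s, hs1, hs2⟩ := Besicovitch.exist_disjoint_covering_families hτ hN q
  refine ⟨s, fun i => ?_, fun i => ?_, fun b => ?_⟩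
  · intro j hj k hk hjk
    have := hs1 i hj hk hjk
    simp only [Function.onFun] at *
    rw [box_eq_preimage _ (hpos j).le, box_eq_preimage _ (hpos k).le]
    exact Disjoint.preimage _ this
  · refine (hs1 i).countable_of_nonempty_interior fun j _ => ?_
    exact (nonempty_ball.2 (q.rpos j)).mono ball_subset_interior_closedBall
  · have := hs2 ⟨b, rfl⟩
    simp only [mem_iUnion] at this
    obtain ⟨i, j, hj, hb⟩ := this
    refine ⟨i, j, hj, ?_⟩
    rw [box_eq_preimage _ (hpos j).le]
    exact ball_subset_closedBall hb

end helpers3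
section helpers4

variable {d : ℕ} {μ : Measure (Euc d)} {n : ℕ} {C₀ βd : ℝ}

lemma tilde_pow_eq (hC₀ : 0 < C₀) (hβ : (2 : ℝ) ^ n < βd) (hg : GrowthBound μ n C₀)
    (Q : CubeOf μ) {m : ℕ} (h : m ≤ tildeIdx μ βd Q) :
    (Q.pow2 m).tilde βd = Q.tilde βd := by
  have hN := tilde_doubling hC₀ hβ hg Q
  have hM := tilde_doubling hC₀ hβ hg (Q.pow2 m)
  set N := tildeIdx μ βd Q with hNd
  set M := tildeIdx μ βd (Q.pow2 m) with hMd
  have e1 : Q.tilde βd = Q.pow2 N := rfl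
  have e2 : (Q.pow2 m).tilde βd = Q.pow2 (m + M) := by rw [← pow2_pow2]; rfl
  rw [pow2_pow2] at hM
  have hle : N ≤ m + M := tildeIdx_le hM
  have : M ≤ N - m := tildeIdx_le (by rw [pow2_pow2]; rwa [show m + (N - m) = N by omega])
  rw [e1, e2, show m + M = N by omega]

lemma ae_supp (hsd : SmallDoublingAE μ βd) : ∀ᵐ x ∂μ, x ∈ measSupp μ := by
  filter_upwards [hsd] with x hx
  obtain ⟨Q, hQ, -⟩ := hx 1 one_pos
  rw [← hQ]; exact Q.c_mem

/-- constant in the averaging bound -/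
noncomputable def cD (d n : ℕ) (C₀ βd : ℝ) : ℝ :=
  11 ^ d * (1 + (cA d n C₀ βd 2 + cB d n C₀ βd))

lemma cD_nonneg (d : ℕ) (hC₀ : 0 < C₀) (hβ : (2 : ℝ) ^ n < βd) :
    0 ≤ cD d n C₀ βd := by
  have := cB_nonneg d hC₀ hβ
  have := cA_nonneg d hC₀ hβ 2
  unfold cD; positivity

lemma avg_bound (hC₀ : 0 < C₀) (hβ : (2 : ℝ) ^ n < βd) (hg : GrowthBound μ n C₀)
    (hsd : SmallDoublingAE μ βd)
    {f : Euc d → ℝ} {a : ℝ} (ha : 0 ≤ a)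
    (H1 : ∀ Q : CubeOf μ, ∫⁻ x in Q.set, ENNReal.ofReal |f x - mQ μ (Q.tilde βd) f| ∂μ ≤
      ENNReal.ofReal a * μ (Q.dil 2))
    (H2 : ∀ Q R : CubeOf μ, Q.set ⊆ R.set → IsDoubling μ 2 βd Q → IsDoubling μ 2 βd R →
      |mQ μ Q f - mQ μ R f| ≤ a * Kcoef n Q R) (Q : CubeOf μ) :
    ∫⁻ x in box Q.c (5 / 4 * Q.ℓ), ENNReal.ofReal |f x - mQ μ (Q.tilde βd) f| ∂μ ≤
      ENNReal.ofReal (cD d n C₀ βd * a) * μ (Q.dil 2) := by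
  have hl := Q.ℓ_pos
  set W := box Q.c (5 / 4 * Q.ℓ) with hW
  let φ : Euc d → (Fin d → ℤ) := fun y i => ⌊8 * (y i - Q.c i) / Q.ℓ⌋
  let F : Finset (Fin d → ℤ) := Fintype.piFinset fun _ => Finset.Icc (-5 : ℤ) 5
  let V : F → Set (Euc d) := fun g => (W ∩ measSupp μ) ∩ {y | φ y = g}
  have hcov : W ≤ᵐ[μ] ⋃ g, V g := by
    filter_upwards [ae_supp hsd] with y hy hyW
    have hyW' : y ∈ W := hyW
    have : φ y ∈ F := by
      simp only [F, Fintype.mem_piFinset, Finset.mem_Icc]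
      intro i
      have h1 := abs_le.1 (hyW' i)
      simp only [φ]
      constructor
      · rw [Int.le_floor, le_div_iff₀ hl]; push_cast; linarith [h1.1]
      · rw [← Int.lt_add_one_iff, Int.floor_lt, div_lt_iff₀ hl]; push_cast; linarith [h1.2]
    exact mem_iUnion.2 ⟨⟨φ y, this⟩, ⟨hyW', hy⟩, rfl⟩
  have hA2 := cA_nonneg d hC₀ hβ 2
  have hB2 := cB_nonneg d hC₀ hβ
  have hV : ∀ g, ∫⁻ x in V g, ENNReal.ofReal |f x - mQ μ (Q.tilde βd) f| ∂μ ≤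
      ENNReal.ofReal ((1 + (cA d n C₀ βd 2 + cB d n C₀ βd)) * a) * μ (Q.dil 2) := by
    intro g
    rcases (V g).eq_empty_or_nonempty with he | ⟨y, ⟨hyW, hyS⟩, hyg⟩
    · rw [he]; simp
    let R : CubeOf μ := ⟨y, Q.ℓ / 4, by positivity, hyS⟩
    have hVR : V g ⊆ R.set := by
      rintro z ⟨-, hzg⟩ i
      have h1 : φ z i = φ y i := by
        have e1 : φ z = g := hzg
        have e2 : φ y = g := hyg
        rw [e1, e2]
      have h2 := Int.abs_sub_lt_one_of_floor_eq_floor h1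
      rw [← sub_div, ← mul_sub, abs_div, abs_of_pos hl, div_lt_one hl, abs_mul] at h2
      rw [show z i - Q.c i - (y i - Q.c i) = z i - y i by ring] at h2
      have : |(8 : ℝ)| = 8 := by norm_num
      rw [this] at h2
      show |z i - y i| ≤ Q.ℓ / 4 / 2
      linarith
    have hRQ : μ (R.dil 2) ≤ μ (Q.dil 2) := by
      rw [dil_eq_box, dil_eq_box]
      refine measure_mono (box_subset (s := 5 / 4 * Q.ℓ / 2) (fun i => ?_) ?_)
      · rw [abs_sub_comm]; exact hyW i
      · show 2 * (Q.ℓ / 4) / 2 + 5 / 4 * Q.ℓ / 2 ≤ 2 * Q.ℓ / 2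
        linarith
    have hRR : μ R.set ≤ μ (R.dil 2) := by
      rw [dil_eq_box, set_eq_box]
      refine measure_mono (box_mono ?_)
      have := R.ℓ_pos
      linarith
    have hmean : |mQ μ (R.tilde βd) f - mQ μ (Q.tilde βd) f| ≤
        a * (cA d n C₀ βd 2 + cB d n C₀ βd) := by
      have h1 := lemA hC₀ hβ hg ha H2 R 2
      have hRl : (R.pow2 2).ℓ = Q.ℓ := by
        show 2 ^ 2 * (Q.ℓ / 4) = Q.ℓ
        ring
      have h2 := lemB hC₀ hβ hg ha H2 (R.pow2 2) Q (by rw [hRl]; linarith) (by rw [hRl]; linarith)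
        (fun i => by
          rw [hRl]
          have : |y i - Q.c i| ≤ _ := hyW i
          show |y i - Q.c i| ≤ _
          linarith)
      have := abs_sub_le (mQ μ (R.tilde βd) f) (mQ μ ((R.pow2 2).tilde βd) f) (mQ μ (Q.tilde βd) f)
      linarith
    calc ∫⁻ x in V g, ENNReal.ofReal |f x - mQ μ (Q.tilde βd) f| ∂μ
        ≤ ∫⁻ x in R.set, ENNReal.ofReal |f x - mQ μ (Q.tilde βd) f| ∂μ := lintegral_mono_set hVR
      _ ≤ ∫⁻ x in R.set, (ENNReal.ofReal |f x - mQ μ (R.tilde βd) f| +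
            ENNReal.ofReal (a * (cA d n C₀ βd 2 + cB d n C₀ βd))) ∂μ := by
          refine lintegral_mono fun x => ?_
          rw [← ENNReal.ofReal_add (abs_nonneg _) (by positivity)]
          refine ENNReal.ofReal_le_ofReal ?_
          have := abs_sub_le (f x) (mQ μ (R.tilde βd) f) (mQ μ (Q.tilde βd) f)
          linarith
      _ = ∫⁻ x in R.set, ENNReal.ofReal |f x - mQ μ (R.tilde βd) f| ∂μ +
            ENNReal.ofReal (a * (cA d n C₀ βd 2 + cB d n C₀ βd)) * μ R.set := by
          rw [lintegral_add_right _ measurable_const, setLIntegral_const]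
      _ ≤ ENNReal.ofReal a * μ (Q.dil 2) +
            ENNReal.ofReal (a * (cA d n C₀ βd 2 + cB d n C₀ βd)) * μ (Q.dil 2) := by
          exact add_le_add ((H1 R).trans (mul_le_mul' le_rfl hRQ))
            (mul_le_mul' le_rfl (hRR.trans hRQ))
      _ = _ := by
          rw [← add_mul, ← ENNReal.ofReal_add ha (by positivity)]
          congr 2; ring
  calc _ ≤ ∫⁻ x in ⋃ g, V g, ENNReal.ofReal |f x - mQ μ (Q.tilde βd) f| ∂μ :=
        lintegral_mono_set' hcov
    _ ≤ ∑' g, ∫⁻ x in V g, ENNReal.ofReal |f x - mQ μ (Q.tilde βd) f| ∂μ :=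
        lintegral_iUnion_le _ _
    _ ≤ ∑' g : F, ENNReal.ofReal ((1 + (cA d n C₀ βd 2 + cB d n C₀ βd)) * a) * μ (Q.dil 2) :=
        ENNReal.tsum_le_tsum hV
    _ = _ := by
        rw [tsum_fintype, Finset.sum_const, Finset.card_univ, Fintype.card_coe, nsmul_eq_mul,
          ← mul_assoc]
        congr 1
        have : F.card = 11 ^ d := by simp [F]
        rw [this]
        unfold cD
        rw [mul_assoc (11 ^ d), ENNReal.ofReal_mul (p := 11 ^ d) (by positivity)]
        congr 1
        rw [← ENNReal.ofReal_natCast]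
        push_cast; rfl

/-- constant of the selection lemma -/
noncomputable def cS (d n : ℕ) (C₀ βd : ℝ) : ℝ := 2 * cA d n C₀ βd 1 + cB d n C₀ βd

lemma cS_nonneg (d : ℕ) (hC₀ : 0 < C₀) (hβ : (2 : ℝ) ^ n < βd) :
    0 ≤ cS d n C₀ βd := by
  have := cB_nonneg d hC₀ hβ
  have := cA_nonneg d hC₀ hβ 1
  unfold cS; positivity

lemma sel (hC₀ : 0 < C₀) (hβ : (2 : ℝ) ^ n < βd) (hg : GrowthBound μ n C₀)
    {f : Euc d → ℝ} {a : ℝ} (ha : 0 ≤ a)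
    (H2 : ∀ Q R : CubeOf μ, Q.set ⊆ R.set → IsDoubling μ 2 βd Q → IsDoubling μ 2 βd R →
      |mQ μ Q f - mQ μ R f| ≤ a * Kcoef n Q R) (Q : CubeOf μ) {x : Euc d} {B : ℝ} (hB : 0 ≤ B)
    (hxQ : x ∈ Q.set)
    (hx1 : Filter.Tendsto (fun l => ⨍ y in box x l, f y ∂μ) (nhdsWithin 0 (Ioi 0)) (nhds (f x)))
    (hx2 : ∀ ℓ₀ : ℝ, 0 < ℓ₀ → ∃ Q : CubeOf μ, Q.c = x ∧ Q.ℓ < ℓ₀ ∧ IsDoubling μ 2 βd Q)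
    (hxB : B < |f x - mQ μ (Q.tilde βd) f|) :
    ∃ P : CubeOf μ, P.c = x ∧ P.ℓ ≤ Q.ℓ / 4 ∧ IsDoubling μ 2 βd P ∧
      B < |mQ μ P f - mQ μ (Q.tilde βd) f| ∧
      |mQ μ P f - mQ μ (Q.tilde βd) f| ≤ B + a * cS d n C₀ βd := by
  have hl := Q.ℓ_pos
  have h1 : ∀ᶠ l in nhdsWithin (0 : ℝ) (Ioi 0),
      B < |(⨍ y in box x l, f y ∂μ) - mQ μ (Q.tilde βd) f| :=
    ((hx1.sub_const _).abs).eventually (lt_mem_nhds hxB)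
  rw [Filter.Eventually, mem_nhdsGT_iff_exists_Ioo_subset] at h1
  obtain ⟨ε, hε, h1⟩ := h1
  have hε' : (0 : ℝ) < ε := hε
  obtain ⟨P0, hP0c, hP0l, hP0d⟩ := hx2 (min ε (Q.ℓ / 4)) (by positivity)
  have hp := P0.ℓ_pos
  let G : Set ℕ := {k | 2 ^ k * P0.ℓ ≤ Q.ℓ / 4 ∧ IsDoubling μ 2 βd (P0.pow2 k) ∧
    B < |mQ μ (P0.pow2 k) f - mQ μ (Q.tilde βd) f|}
  have hG0 : 0 ∈ G := by
    refine ⟨?_, ?_, ?_⟩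
    · have := hP0l.trans_le (min_le_right _ _)
      simpa using this.le
    · rwa [pow2_zero']
    · rw [pow2_zero']
      have := h1 ⟨hp, hP0l.trans_le (min_le_left _ _)⟩
      simp only [mem_ofPred_eq] at this
      rw [← hP0c] at this
      exact this
  have hex : ∃ K : ℕ, Q.ℓ / 4 < 2 ^ K * P0.ℓ := by
    obtain ⟨K, hK⟩ := pow_unbounded_of_one_lt (Q.ℓ / 4 / P0.ℓ) (by norm_num : (1 : ℝ) < 2)
    exact ⟨K, by rwa [div_lt_iff₀ hp] at hK⟩
  have hmono : ∀ i j : ℕ, i ≤ j → 2 ^ i * P0.ℓ ≤ 2 ^ j * P0.ℓ := by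
    intro i j hij
    gcongr
    norm_num
  have hGb : BddAbove G := by
    obtain ⟨K, hK⟩ := hex
    refine ⟨K, fun k hk => ?_⟩
    by_contra! hlt
    have := hmono K k hlt.le
    linarith [hk.1]
  set k := sSup G with hkd
  have hkG : k ∈ G := Nat.sSup_mem ⟨0, hG0⟩ hGb
  have hkmax : ∀ j ∈ G, j ≤ k := fun j hj => le_csSup hGb hj
  refine ⟨P0.pow2 k, hP0c, hkG.1, hkG.2.1, hkG.2.2, ?_⟩
  have hA := lemA hC₀ hβ hg ha H2 (P0.pow2 k) 1
  rw [tilde_of_doubling hkG.2.1, pow2_pow2] at hA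
  have hJ := tilde_doubling hC₀ hβ hg (P0.pow2 (k + 1))
  set J := tildeIdx μ βd (P0.pow2 (k + 1)) with hJd
  have e3 : (P0.pow2 (k + 1)).tilde βd = P0.pow2 (k + 1 + J) := by
    rw [← pow2_pow2 P0 (k + 1) J]; rfl
  rw [pow2_pow2] at hJ
  have hA0 := cA_nonneg d hC₀ hβ 1
  have hB0 := cB_nonneg d hC₀ hβ
  have hfin : |mQ μ ((P0.pow2 (k + 1)).tilde βd) f - mQ μ (Q.tilde βd) f| ≤
      B + a * (cA d n C₀ βd 1 + cB d n C₀ βd) := by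
    rcases le_or_gt (2 ^ (k + 1 + J) * P0.ℓ) (Q.ℓ / 4) with hc | hc
    · have hn : k + 1 + J ∉ G := fun h => by have := hkmax _ h; omega
      have : ¬ B < |mQ μ (P0.pow2 (k + 1 + J)) f - mQ μ (Q.tilde βd) f| :=
        fun h => hn ⟨hc, hJ, h⟩
      rw [e3]
      have h0 : 0 ≤ a * (cA d n C₀ βd 1 + cB d n C₀ βd) := by positivity
      linarith [not_lt.1 this]
    · set K := Nat.find hex with hKd
      have hK1 : Q.ℓ / 4 < 2 ^ K * P0.ℓ := Nat.find_spec hex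
      have hK2 : K ≤ k + 1 + J := Nat.find_min' hex hc
      have hK3 : k + 1 ≤ K := by
        by_contra! hlt
        have := hmono K k (by omega)
        linarith [hkG.1]
      have hK4 : 2 ^ (K - 1) * P0.ℓ ≤ Q.ℓ / 4 := by
        have := Nat.find_min hex (m := K - 1) (by omega)
        exact not_lt.1 this
      have hK5 : (2 : ℝ) ^ K = 2 * 2 ^ (K - 1) := by
        rw [← pow_succ', show K - 1 + 1 = K by omega]
      have et := tilde_pow_eq hC₀ hβ hg (P0.pow2 (k + 1)) (m := K - (k + 1)) (by omega)
      rw [pow2_pow2, show k + 1 + (K - (k + 1)) = K by omega] at et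
      rw [← et]
      have hA' := lemA hC₀ hβ hg ha H2 (P0.pow2 K) 1
      rw [pow2_pow2] at hA'
      have hl' : (P0.pow2 (K + 1)).ℓ = 2 * (2 ^ K * P0.ℓ) := by
        rw [pow2_l]; ring
      have hK6 : 2 ^ K * P0.ℓ ≤ Q.ℓ / 2 := by rw [hK5]; linarith
      have hB' := lemB hC₀ hβ hg ha H2 (P0.pow2 (K + 1)) Q (by rw [hl']; linarith)
        (by rw [hl']; linarith) (fun i => by
          rw [hl', pow2_c, hP0c]
          have := hxQ i
          linarith)
      have := abs_sub_le (mQ μ ((P0.pow2 K).tilde βd) f) (mQ μ ((P0.pow2 (K + 1)).tilde βd) f)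
        (mQ μ (Q.tilde βd) f)
      linarith
  have := abs_sub_le (mQ μ (P0.pow2 k) f) (mQ μ ((P0.pow2 (k + 1)).tilde βd) f)
        (mQ μ (Q.tilde βd) f)
  unfold cS
  linarith

lemma mean_le (hg : GrowthBound μ n C₀) {f : Euc d → ℝ} (hf : LocallyIntegrable f μ)
    (P : CubeOf μ) (c : ℝ) :
    ENNReal.ofReal |mQ μ P f - c| * μ P.set ≤ ∫⁻ x in P.set, ENNReal.ofReal |f x - c| ∂μ := by
  have hcomp : IsCompact P.set := by
    rw [set_eq_box]
    refine Metric.isCompact_of_isClosed_isBounded (box_isClosed _ _) ?_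
    exact Metric.isBounded_ball.subset (box_subset_ball P.c P.ℓ_pos)
  have hfi : IntegrableOn f P.set μ := hf.integrableOn_isCompact hcomp
  have htop : μ P.set ≠ ⊤ := (box_lt_top hg P.c P.ℓ_pos).ne
  have hpos : μ P.set ≠ 0 := (box_pos P.c_mem P.ℓ_pos).ne'
  have hr : 0 < (μ P.set).toReal := ENNReal.toReal_pos hpos htop
  have h1 : ∫ x in P.set, (f x - c) ∂μ = (μ P.set).toReal * (mQ μ P f - c) := by
    have hci : IntegrableOn (fun _ : Euc d => c) P.set μ := by
      apply integrableOn_const htop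
    rw [integral_sub hfi hci, mQ, setAverage_eq, setIntegral_const, measureReal_def]
    simp only [smul_eq_mul]
    field_simp
  have h2 := enorm_integral_le_lintegral_enorm (μ := μ.restrict P.set) (fun x => f x - c)
  rw [h1] at h2
  simp only [Real.enorm_eq_ofReal_abs] at h2
  rw [abs_mul, abs_of_pos hr, mul_comm, ENNReal.ofReal_mul (abs_nonneg _),
    ENNReal.ofReal_toReal htop] at h2
  exact h2

end helpers4
section helpers5

lemma jn (d n : ℕ) (C₀ βd : ℝ) (hC₀ : 0 < C₀) (hβ : (2 : ℝ) ^ n < βd) :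
    ∃ A : ℝ, 0 < A ∧ ∀ μ : Measure (Euc d), GrowthBound μ n C₀ → SmallDoublingAE μ βd →
      ∀ f : Euc d → ℝ, LocallyIntegrable f μ → ∀ a : ℝ, 0 < a →
      (∀ Q : CubeOf μ, ∫⁻ x in Q.set, ENNReal.ofReal |f x - mQ μ (Q.tilde βd) f| ∂μ ≤
        ENNReal.ofReal a * μ (Q.dil 2)) →
      (∀ Q R : CubeOf μ, Q.set ⊆ R.set → IsDoubling μ 2 βd Q → IsDoubling μ 2 βd R →
        |mQ μ Q f - mQ μ R f| ≤ a * Kcoef n Q R) →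
      ∀ (k : ℕ) (Q : CubeOf μ),
        μ (Q.set ∩ {x | k * (A * a) < |f x - mQ μ (Q.tilde βd) f|}) ≤
          ENNReal.ofReal ((1 / 2) ^ k) * μ (Q.dil 2) := by
  obtain ⟨N, hN⟩ := besic d
  have hD := cD_nonneg d hC₀ hβ
  have hS := cS_nonneg d hC₀ hβ
  have hb : 0 < βd := lt_trans (by positivity) hβ
  set D := cD d n C₀ βd with hDd
  set S := cS d n C₀ βd with hSd
  set B : ℝ := 2 * N * D * βd + 1 with hBd
  have hB : 0 < B := by positivity
  refine ⟨B + S, by positivity, ?_⟩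
  intro μ hg hsd f hf a ha H1 H2 k
  induction k with
  | zero =>
    intro Q
    simp only [pow_zero, ENNReal.ofReal_one, one_mul]
    refine measure_mono (inter_subset_left.trans ?_)
    rw [set_eq_box, dil_eq_box]
    refine box_mono ?_
    linarith [Q.ℓ_pos]
  | succ k ih =>
    intro Q
    have hl := Q.ℓ_pos
    set m := mQ μ (Q.tilde βd) f with hm
    set E := Q.set ∩ {x | ((k + 1 : ℕ) : ℝ) * ((B + S) * a) < |f x - m|} with hE
    -- selection
    let good : Set (Euc d) := {x | x ∈ E ∧
      Filter.Tendsto (fun l => ⨍ y in box x l, f y ∂μ) (nhdsWithin 0 (Ioi 0)) (nhds (f x)) ∧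
      ∀ ℓ₀ : ℝ, 0 < ℓ₀ → ∃ Q : CubeOf μ, Q.c = x ∧ Q.ℓ < ℓ₀ ∧ IsDoubling μ 2 βd Q}
    have hsel : ∀ x : good, ∃ P : CubeOf μ, P.c = x ∧ P.ℓ ≤ Q.ℓ / 4 ∧ IsDoubling μ 2 βd P ∧
        B * a < |mQ μ P f - m| ∧ |mQ μ P f - m| ≤ B * a + a * S := by
      rintro ⟨x, ⟨hxQ, hxE⟩, hx1, hx2⟩
      refine sel hC₀ hβ hg ha.le H2 Q (by positivity) hxQ hx1 hx2 (lt_of_le_of_lt ?_ hxE)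
      push_cast
      have : 0 ≤ (k : ℝ) * ((B + S) * a) := by positivity
      nlinarith [mul_nonneg hS ha.le]
    choose P hPc hPl hPd hP1 hP2 using hsel
    obtain ⟨s, hs1, hs2, hs3⟩ := hN good (fun x => (P x).c) (fun x => (P x).ℓ) (Q.ℓ / 4)
      (fun x => (P x).ℓ_pos) hPl
    have hEcov : E ≤ᵐ[μ] ⋃ i, ⋃ j ∈ s i, E ∩ (P j).set := by
      filter_upwards [leb_diff hg hf, hsd] with x hx1 hx2 hxE
      have hxE' : x ∈ E := hxE
      obtain ⟨i, j, hj, hij⟩ := hs3 ⟨x, hxE', hx1, hx2⟩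
      have hc := hPc ⟨x, hxE', hx1, hx2⟩
      have hij : x ∈ (P j).set := by
        simp only [hc] at hij
        exact hij
      have : x ∈ ⋃ i, ⋃ j ∈ s i, E ∩ (P j).set := by
        simp only [mem_iUnion]
        exact ⟨i, j, hj, hxE', hij⟩
      exact this
    -- each cube
    have hcube : ∀ j : good, μ (E ∩ (P j).set) ≤
        ENNReal.ofReal ((1 / 2) ^ k * βd) * μ (P j).set := by
      intro j
      have h1 : E ∩ (P j).set ⊆
          (P j).set ∩ {x | k * ((B + S) * a) < |f x - mQ μ ((P j).tilde βd) f|} := by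
        rintro x ⟨⟨-, hxE⟩, hxP⟩
        refine ⟨hxP, ?_⟩
        have hxE' : ((k + 1 : ℕ) : ℝ) * ((B + S) * a) < |f x - m| := hxE
        show k * ((B + S) * a) < |f x - mQ μ ((P j).tilde βd) f|
        rw [tilde_of_doubling (hPd j)]
        have h3 := hP2 j
        have h4 := abs_sub_le (f x) (mQ μ (P j) f) m
        push_cast at hxE'
        linarith
      refine (measure_mono h1).trans ((ih (P j)).trans ?_)
      rw [ENNReal.ofReal_mul (by positivity), mul_assoc]
      exact mul_le_mul' le_rfl (hPd j)
    have hfam : ∀ i, ∑' j : s i, μ (P j).set ≤ ENNReal.ofReal (D / B) * μ (Q.dil 2) := by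
      intro i
      have h1 : ∀ j : s i, ENNReal.ofReal (B * a) * μ (P j).set ≤
          ∫⁻ x in (P j).set, ENNReal.ofReal |f x - m| ∂μ := fun j =>
        (mul_le_mul' (ENNReal.ofReal_le_ofReal (hP1 j).le) le_rfl).trans (mean_le hg hf (P j) m)
      have h2 : ENNReal.ofReal (B * a) * ∑' j : s i, μ (P j).set ≤
          ENNReal.ofReal (D * a) * μ (Q.dil 2) := by
        rw [← ENNReal.tsum_mul_left]
        refine (ENNReal.tsum_le_tsum h1).trans ?_
        rw [← lintegral_biUnion (s := fun j => (P j).set) (hs2 i) (fun j _ => box_meas _ _) (hs1 i)]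
        refine le_trans (lintegral_mono_set ?_) (avg_bound hC₀ hβ hg hsd ha.le H1 H2 Q)
        refine iUnion₂_subset fun j _ => ?_
        rw [set_eq_box]
        refine box_subset (s := Q.ℓ / 2) (fun i => ?_) ?_
        · rw [abs_sub_comm, hPc]
          exact j.2.1.1 i
        · have := hPl j
          linarith
      have hBa : ENNReal.ofReal (B * a) ≠ 0 := by
        rw [Ne, ENNReal.ofReal_eq_zero, not_le]; positivity
      have h3 : ENNReal.ofReal (D * a) = ENNReal.ofReal (B * a) * ENNReal.ofReal (D / B) := by
        rw [← ENNReal.ofReal_mul (by positivity)]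
        congr 1; field_simp
      rw [h3, mul_assoc] at h2
      exact (ENNReal.mul_le_mul_iff_right hBa ENNReal.ofReal_ne_top).1 h2
    calc μ E ≤ μ (⋃ i, ⋃ j ∈ s i, E ∩ (P j).set) := measure_mono_ae hEcov
      _ ≤ ∑ i, μ (⋃ j ∈ s i, E ∩ (P j).set) := by
          refine (measure_iUnion_le _).trans_eq (tsum_fintype _)
      _ ≤ ∑ i : Fin N, ENNReal.ofReal ((1 / 2) ^ k * βd) *
            (ENNReal.ofReal (D / B) * μ (Q.dil 2)) := by
          refine Finset.sum_le_sum fun i _ => ?_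
          refine (measure_biUnion_le μ (hs2 i) _).trans ?_
          refine (ENNReal.tsum_le_tsum fun j : s i => hcube j).trans ?_
          rw [ENNReal.tsum_mul_left]
          exact mul_le_mul' le_rfl (hfam i)
      _ ≤ _ := by
          rw [Finset.sum_const, Finset.card_univ, Fintype.card_fin, nsmul_eq_mul, ← mul_assoc,
            ← mul_assoc]
          refine mul_le_mul' ?_ le_rfl
          rw [← ENNReal.ofReal_natCast, ← ENNReal.ofReal_mul (by positivity),
            ← ENNReal.ofReal_mul (by positivity)]
          refine ENNReal.ofReal_le_ofReal ?_
          have : N * βd * (D / B) ≤ 1 / 2 := by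
            rw [mul_div_assoc', div_le_iff₀ hB, hBd]
            linarith
          calc N * ((1 / 2) ^ k * βd) * (D / B) = (1 / 2) ^ k * (N * βd * (D / B)) := by ring
            _ ≤ (1 / 2) ^ k * (1 / 2) := by gcongr
            _ = _ := by rw [pow_succ]

lemma summ_aux (p : ℝ) : Summable fun k : ℕ => ((k : ℝ) + 1) ^ p * (1 / 2 : ℝ) ^ k := by
  obtain ⟨m, hm⟩ := exists_nat_ge p
  have h := summable_pow_mul_geometric_of_norm_lt_one m (r := (1 / 2 : ℝ)) (by norm_num)
  have h2 := ((summable_nat_add_iff 1).2 h).mul_left 2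
  refine Summable.of_nonneg_of_le (fun k => by positivity) (fun k => ?_) h2
  have h1 : ((k : ℝ) + 1) ^ p ≤ ((k : ℝ) + 1) ^ m := by
    rw [← Real.rpow_natCast]
    refine Real.rpow_le_rpow_of_exponent_le ?_ hm
    linarith [(Nat.cast_nonneg k : (0 : ℝ) ≤ k)]
  push_cast
  calc _ ≤ ((k : ℝ) + 1) ^ m * (1 / 2 : ℝ) ^ k := by gcongr
    _ = _ := by rw [pow_succ]; ring

lemma layer {X : Type*} [MeasurableSpace X] (ν : Measure X) (g : X → ℝ) (hg0 : ∀ x, 0 ≤ g x)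
    (hgm : AEMeasurable g ν) (p t : ℝ) (hp : 1 ≤ p) (ht : 0 < t) (M : ℝ≥0∞)
    (h : ∀ k : ℕ, ν {x | k * t < g x} ≤ ENNReal.ofReal ((1 / 2) ^ k) * M) :
    ∫⁻ x, ENNReal.ofReal (g x) ^ p ∂ν ≤
      ENNReal.ofReal (t * (1 + ∑' k : ℕ, ((k : ℝ) + 1) ^ p * (1 / 2 : ℝ) ^ k)) ^ p * M := by
  have hp0 : 0 ≤ p := by linarith
  have hpt : ∀ x, ENNReal.ofReal (g x) ^ p ≤ ∑' k : ℕ,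
      ({x | k * t < g x} : Set X).indicator
        (fun _ => ENNReal.ofReal (((k : ℝ) + 1) ^ p * t ^ p)) x := by
    intro x
    rcases (hg0 x).eq_or_lt with h0 | h0
    · rw [← h0]
      simp [ENNReal.zero_rpow_of_pos (by linarith : 0 < p)]
    have hpos : 0 < g x / t := by positivity
    set j := ⌈g x / t⌉₊ with hj
    have hj1 : 0 < j := Nat.ceil_pos.2 hpos
    have hj2 : g x / t ≤ j := Nat.le_ceil _
    have hj3 : ((j - 1 : ℕ) : ℝ) < g x / t := Nat.lt_ceil.1 (by omega)
    refine le_trans ?_ (ENNReal.le_tsum (j - 1))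
    rw [indicator_of_mem]
    · rw [ENNReal.ofReal_rpow_of_nonneg (hg0 x) hp0]
      refine ENNReal.ofReal_le_ofReal ?_
      rw [← Real.mul_rpow (by positivity) ht.le]
      refine Real.rpow_le_rpow (hg0 x) ?_ hp0
      rw [Nat.cast_sub (by omega)]
      rw [div_le_iff₀ ht] at hj2
      simpa using hj2
    · show ((j - 1 : ℕ) : ℝ) * t < g x
      rwa [lt_div_iff₀ ht] at hj3
  have hms : ∀ k : ℕ, NullMeasurableSet {x | k * t < g x} ν := fun k =>
    nullMeasurableSet_lt aemeasurable_const hgm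
  set Z := ∑' k : ℕ, ((k : ℝ) + 1) ^ p * (1 / 2 : ℝ) ^ k with hZ
  have hZ0 : 0 ≤ Z := tsum_nonneg fun k => by positivity
  calc ∫⁻ x, ENNReal.ofReal (g x) ^ p ∂ν ≤ _ := lintegral_mono hpt
    _ = ∑' k : ℕ, ENNReal.ofReal (((k : ℝ) + 1) ^ p * t ^ p) * ν {x | k * t < g x} := by
        rw [lintegral_tsum fun k => aemeasurable_const.indicator₀ (hms k)]
        refine tsum_congr fun k => ?_
        rw [lintegral_indicator_const₀ (hms k)]
    _ ≤ ∑' k : ℕ, ENNReal.ofReal (((k : ℝ) + 1) ^ p * (1 / 2) ^ k) *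
          (ENNReal.ofReal (t ^ p) * M) := by
        refine ENNReal.tsum_le_tsum fun k => ?_
        refine (mul_le_mul' le_rfl (h k)).trans_eq ?_
        rw [ENNReal.ofReal_mul (by positivity), ENNReal.ofReal_mul (by positivity)]
        ring
    _ = ENNReal.ofReal Z * (ENNReal.ofReal (t ^ p) * M) := by
        rw [ENNReal.tsum_mul_right, ENNReal.ofReal_tsum_of_nonneg (fun k => by positivity)
          (summ_aux p)]
    _ ≤ _ := by
        rw [← mul_assoc]
        refine mul_le_mul' ?_ le_rfl
        rw [← ENNReal.ofReal_mul hZ0, ENNReal.ofReal_rpow_of_nonneg (by positivity) hp0]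
        refine ENNReal.ofReal_le_ofReal ?_
        rw [Real.mul_rpow ht.le (by positivity), mul_comm]
        gcongr
        calc Z ≤ (1 + Z) ^ (1 : ℝ) := by rw [Real.rpow_one]; linarith
          _ ≤ _ := Real.rpow_le_rpow_of_exponent_le (by linarith) hp

lemma rbmo_le_p {d : ℕ} {μ : Measure (Euc d)} {n : ℕ} {C₀ βd p : ℝ} (hp : 1 ≤ p)
    (hg : GrowthBound μ n C₀)
    {f : Euc d → ℝ} (hf : LocallyIntegrable f μ) {C : ℝ≥0∞} (h : RBMOpBoundWith μ n βd p f C) :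
    RBMOBoundWith μ n βd f C := by
  refine ⟨fun Q => ?_, h.2⟩
  have hp0 : 0 < p := by linarith
  set m := mQ μ (Q.tilde βd) f
  have hfm : AEMeasurable (fun x => ENNReal.ofReal |f x - m|) (μ.restrict Q.set) := by
    have h1 : AEMeasurable f μ := hf.aestronglyMeasurable.aemeasurable
    have h2 : AEMeasurable (fun x => f x - m) μ := h1.sub_const m
    have h3 : AEMeasurable (fun x => |f x - m|) μ := by
      simpa only [Real.norm_eq_abs] using h2.norm
    exact h3.ennreal_ofReal.restrict
  have hsub : μ Q.set ≤ μ (Q.dil 2) := by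
    rw [set_eq_box, dil_eq_box]
    refine measure_mono (box_mono ?_)
    linarith [Q.ℓ_pos]
  have hl := Q.ℓ_pos
  have htop : μ (Q.dil 2) ≠ ⊤ := (box_lt_top hg Q.c (by positivity : 0 < 2 * Q.ℓ)).ne
  have hpos : μ (Q.dil 2) ≠ 0 := (box_pos Q.c_mem (by positivity : 0 < 2 * Q.ℓ)).ne'
  have hHol : ∫⁻ x in Q.set, ENNReal.ofReal |f x - m| ∂μ ≤
      (∫⁻ x in Q.set, ENNReal.ofReal |f x - m| ^ p ∂μ) ^ (1 / p) * μ Q.set ^ (1 - 1 / p) := by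
    rcases hp.eq_or_lt with h1 | h1
    · rw [← h1]; simp
    have hpq : p.HolderConjugate (p / (p - 1)) := Real.HolderConjugate.conjExponent h1
    have := ENNReal.lintegral_mul_le_Lp_mul_Lq (μ.restrict Q.set) hpq hfm
      (g := fun _ => 1) aemeasurable_const
    simp only [Pi.mul_apply, mul_one, ENNReal.one_rpow, lintegral_one,
      Measure.restrict_apply_univ] at this
    rwa [show 1 / (p / (p - 1)) = 1 - 1 / p by field_simp] at this
  refine hHol.trans ?_
  have hq : 0 ≤ 1 - 1 / p := by
    have : 1 / p ≤ 1 := by rw [div_le_one hp0]; exact hp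
    linarith
  calc _ ≤ (C ^ p * μ (Q.dil 2)) ^ (1 / p) * μ (Q.dil 2) ^ (1 - 1 / p) :=
        mul_le_mul' (ENNReal.rpow_le_rpow (h.1 Q) (by positivity)) (ENNReal.rpow_le_rpow hsub hq)
    _ = _ := by
        rw [ENNReal.mul_rpow_of_nonneg _ _ (by positivity), ← ENNReal.rpow_mul,
          mul_one_div_cancel hp0.ne', ENNReal.rpow_one, mul_assoc, ← ENNReal.rpow_add _ _ hpos htop,
          add_sub_cancel, ENNReal.rpow_one]

end helpers5

/-- Corollary 3.5: the spaces `RBMO^p(μ)`, `p ∈ [1,∞)`, all coincide with `RBMO(μ)`,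
with equivalent norms. -/
theorem statement6 (d n : ℕ) (hn : 1 ≤ n) (hnd : n ≤ d) (C₀ βd p : ℝ)
    (hC₀ : 0 < C₀) (hβ : (2 : ℝ) ^ n < βd) (hp : 1 ≤ p) :
    ∃ C : ℝ, 1 ≤ C ∧ ∀ μ : MeasureTheory.Measure (Euc d), GrowthBound μ n C₀ →
      SmallDoublingAE μ βd →
      ∀ f : Euc d → ℝ, MeasureTheory.LocallyIntegrable f μ →
        rbmoNorm μ n βd f ≤ ENNReal.ofReal C * rbmoPNorm μ n βd p f ∧
        rbmoPNorm μ n βd p f ≤ ENNReal.ofReal C * rbmoNorm μ n βd f := by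
  obtain ⟨A, hA, hjn⟩ := jn d n C₀ βd hC₀ hβ
  set Z := ∑' k : ℕ, ((k : ℝ) + 1) ^ p * (1 / 2 : ℝ) ^ k with hZ
  have hZ0 : 0 ≤ Z := tsum_nonneg fun k => by positivity
  refine ⟨1 + A * (1 + Z), by nlinarith [mul_nonneg hA.le hZ0], ?_⟩
  intro μ hg hsd f hf
  set C := 1 + A * (1 + Z) with hC
  have hAZ : 0 ≤ A * (1 + Z) := by positivity
  have hC1 : 1 ≤ C := by linarith
  have hC1' : 1 ≤ ENNReal.ofReal C := by
    rw [← ENNReal.ofReal_one]; exact ENNReal.ofReal_le_ofReal hC1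
  constructor
  · have h1 : rbmoNorm μ n βd f ≤ rbmoPNorm μ n βd p f :=
      le_sInf fun C hC => sInf_le (rbmo_le_p hp hg hf hC)
    exact h1.trans (le_mul_of_one_le_left (zero_le) hC1')
  · have hCne : ENNReal.ofReal C ≠ 0 := (lt_of_lt_of_le one_pos hC1').ne'
    rw [mul_comm, ← ENNReal.div_le_iff hCne ENNReal.ofReal_ne_top]
    refine le_of_forall_gt_imp_ge_of_dense fun t ht => ?_
    rcases eq_or_ne t ⊤ with rfl | htop
    · exact le_top
    have ha : 0 < t.toReal := ENNReal.toReal_pos (lt_of_le_of_lt (zero_le) ht).ne' htop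
    set a := t.toReal with had
    have hta : t = ENNReal.ofReal a := (ENNReal.ofReal_toReal htop).symm
    obtain ⟨C', hC', hC't⟩ := sInf_lt_iff.1 ht
    have H1 : ∀ Q : CubeOf μ, ∫⁻ x in Q.set, ENNReal.ofReal |f x - mQ μ (Q.tilde βd) f| ∂μ ≤
        ENNReal.ofReal a * μ (Q.dil 2) := fun Q => by
      rw [← hta]
      exact (hC'.1 Q).trans (mul_le_mul' hC't.le le_rfl)
    have H2' : ∀ Q R : CubeOf μ, Q.set ⊆ R.set → IsDoubling μ 2 βd Q → IsDoubling μ 2 βd R →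
        ENNReal.ofReal |mQ μ Q f - mQ μ R f| ≤ t * ENNReal.ofReal (Kcoef n Q R) :=
      fun Q R h1 h2 h3 => (hC'.2 Q R h1 h2 h3).trans (mul_le_mul' hC't.le le_rfl)
    have H2 : ∀ Q R : CubeOf μ, Q.set ⊆ R.set → IsDoubling μ 2 βd Q → IsDoubling μ 2 βd R →
        |mQ μ Q f - mQ μ R f| ≤ a * Kcoef n Q R := fun Q R h1 h2 h3 => by
      have h := H2' Q R h1 h2 h3
      have hK : 0 ≤ Kcoef n Q R := by
        have := Kcoef_pos (n := n) Q R
        linarith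
      rw [hta, ← ENNReal.ofReal_mul ha.le] at h
      exact (ENNReal.ofReal_le_ofReal_iff (mul_nonneg ha.le hK)).1 h
    refine ENNReal.div_le_of_le_mul ?_
    refine sInf_le ⟨fun Q => ?_, fun Q R h1 h2 h3 => ?_⟩
    · have hfm : AEMeasurable (fun x => |f x - mQ μ (Q.tilde βd) f|) (μ.restrict Q.set) := by
        have h1 : AEMeasurable f μ := hf.aestronglyMeasurable.aemeasurable
        have h2 : AEMeasurable (fun x => f x - mQ μ (Q.tilde βd) f) μ := h1.sub_const _
        have h3 : AEMeasurable (fun x => |f x - mQ μ (Q.tilde βd) f|) μ := by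
          simpa only [Real.norm_eq_abs] using h2.norm
        exact h3.restrict
      refine (layer (μ.restrict Q.set) (fun x => |f x - mQ μ (Q.tilde βd) f|)
        (fun x => abs_nonneg _) hfm p (A * a) hp (mul_pos hA ha) (μ (Q.dil 2))
        (fun k => ?_)).trans ?_
      · have hms : MeasurableSet Q.set := box_meas _ _
        rw [Measure.restrict_apply' hms, inter_comm]
        exact hjn μ hg hsd f hf a ha H1 H2 k Q
      · refine mul_le_mul' (ENNReal.rpow_le_rpow ?_ (by linarith)) le_rfl
        rw [hta, ← ENNReal.ofReal_mul ha.le]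
        refine ENNReal.ofReal_le_ofReal ?_
        rw [← hZ, hC]
        nlinarith
    · refine (H2' Q R h1 h2 h3).trans (mul_le_mul' ?_ le_rfl)
      exact le_mul_of_one_le_right (zero_le) hC1'
end

section
/- There is a constant C, depending only on d, n, C₀ and β_d, such that for every g ∈ RBMO(μ): ‖g‖_* ≤ C · sup { |∫ f·g dμ| : f an atomic block with |f|_{H^{1,∞}_atb(μ)} ≤ 1 }. Consequently, the norm of the linear functional L_g(f) = ∫ f·g dμ on H^{1,∞}_atb(μ) is comparable to ‖g‖_*. -/
/-!
Common definitions for formalizing Tolsa, "BMO, H¹, and Calderón–Zygmund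
operators for non doubling measures".
-/

open MeasureTheory Metric Set Function
open scoped Classical
open scoped ENNReal NNReal BigOperators

namespace CubeOf

variable {d : ℕ} {μ : MeasureTheory.Measure (Euc d)}

lemma dil_two (Q : CubeOf μ) : Q.dil 2 = (Q.pow2 1).set := by
  simp [dil, set, pow2]

lemma set_meas (Q : CubeOf μ) : MeasurableSet Q.set := by
  have : Q.set = ⋂ i, {y : Euc d | |y i - Q.c i| ≤ Q.ℓ / 2} := by
    ext y; simp [set]
  rw [this]
  refine MeasurableSet.iInter fun i => ?_
  refine (IsClosed.measurableSet ?_)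
  refine isClosed_le ?_ continuous_const
  fun_prop

lemma set_subset_of (Q R : CubeOf μ)
    (h : ∀ i, |Q.c i - R.c i| + Q.ℓ / 2 ≤ R.ℓ / 2) : Q.set ⊆ R.set := by
  intro y hy i
  have h1 := hy i
  have h2 := h i
  have := abs_sub_le (y i) (Q.c i) (R.c i)
  linarith

lemma of_set_subset (Q R : CubeOf μ) (h : Q.set ⊆ R.set) (i : Fin d) :
    |Q.c i - R.c i| + Q.ℓ / 2 ≤ R.ℓ / 2 := by
  have hp := Q.ℓ_pos
  have h1 : (WithLp.toLp 2 (fun i => Q.c i + Q.ℓ / 2) : Euc d) ∈ R.set := by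
    apply h
    intro j
    simp [abs_of_pos (half_pos hp)]
  have h2 : (WithLp.toLp 2 (fun i => Q.c i - Q.ℓ / 2) : Euc d) ∈ R.set := by
    apply h
    intro j
    simp [abs_of_pos (half_pos hp)]
  have h1 := h1 i
  have h2 := h2 i
  simp only at h1 h2
  rw [abs_le] at h1 h2
  rcases abs_cases (Q.c i - R.c i) with ⟨e, _⟩ | ⟨e, _⟩ <;> rw [e] <;> linarith [h1.1, h1.2, h2.1, h2.2]

lemma set_subset_pow2 (Q : CubeOf μ) (k : ℕ) : Q.set ⊆ (Q.pow2 k).set := by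
  apply set_subset_of
  intro i
  have : (1:ℝ) ≤ 2 ^ k := one_le_pow₀ (by norm_num)
  have hp := Q.ℓ_pos
  simp only [pow2, sub_self, abs_zero]
  nlinarith

lemma set_subset_dil (Q : CubeOf μ) : Q.set ⊆ Q.dil 2 := by
  rw [dil_two]; exact set_subset_pow2 Q 1

lemma measure_pos (Q : CubeOf μ) : 0 < μ Q.set := by
  refine lt_of_lt_of_le (Q.c_mem (Q.ℓ / 2) (half_pos Q.ℓ_pos)) (measure_mono ?_)
  intro y hy i
  rw [Metric.mem_ball, EuclideanSpace.dist_eq] at hy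
  have h := PiLp.norm_apply_le (y - Q.c) i
  rw [← EuclideanSpace.dist_eq, dist_eq_norm] at hy
  simp only [PiLp.sub_apply, Real.norm_eq_abs] at h
  linarith

variable {n : ℕ} {C₀ : ℝ}

lemma measure_le (hd : 1 ≤ d) (hC₀ : 0 < C₀) (hg : GrowthBound μ n C₀) (Q : CubeOf μ) :
    μ Q.set ≤ ENNReal.ofReal (C₀ * (d * Q.ℓ) ^ n) := by
  have hp := Q.ℓ_pos
  have hd' : (1:ℝ) ≤ d := by exact_mod_cast hd
  refine le_trans (measure_mono ?_) (hg Q.c (d * Q.ℓ) (by positivity))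
  intro y hy
  rw [Metric.mem_ball, EuclideanSpace.dist_eq]
  rw [Real.sqrt_lt' (by positivity)]
  calc ∑ i, dist (y i) (Q.c i) ^ 2 ≤ ∑ i : Fin d, (Q.ℓ / 2) ^ 2 := by
        refine Finset.sum_le_sum fun i _ => ?_
        rw [Real.dist_eq]
        exact pow_le_pow_left₀ (abs_nonneg _) (hy i) 2
    _ = d * (Q.ℓ / 2) ^ 2 := by simp
    _ < (d * Q.ℓ) ^ 2 := by nlinarith [sq_pos_of_pos hp, mul_pos (sq_pos_of_pos hp) (by linarith : (0:ℝ) < d)]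

lemma measure_lt_top (hd : 1 ≤ d) (hC₀ : 0 < C₀) (hg : GrowthBound μ n C₀) (Q : CubeOf μ) :
    μ Q.set < ⊤ := (measure_le hd hC₀ hg Q).trans_lt ENNReal.ofReal_lt_top

/-- density of the dyadic dilates -/
noncomputable def th (n : ℕ) (Q : CubeOf μ) (k : ℕ) : ℝ :=
  (μ ((Q.pow2 k).set)).toReal / ((2 ^ k * Q.ℓ) ^ n)

lemma th_nonneg (Q : CubeOf μ) (k : ℕ) : 0 ≤ Q.th n k := by
  have := Q.ℓ_pos
  unfold th; positivity

lemma pow2_pow2 (Q : CubeOf μ) (m k : ℕ) : (Q.pow2 m).pow2 k = Q.pow2 (m + k) := by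
  simp only [pow2, CubeOf.mk.injEq, true_and]
  ring

lemma th_pow2 (Q : CubeOf μ) (m k : ℕ) : (Q.pow2 m).th n k = Q.th n (m + k) := by
  unfold th
  rw [pow2_pow2]
  simp only [pow2]
  congr 2
  ring

lemma th_le (hd : 1 ≤ d) (hC₀ : 0 < C₀) (hg : GrowthBound μ n C₀) (Q : CubeOf μ) (k : ℕ) :
    Q.th n k ≤ C₀ * d ^ n := by
  have hp := Q.ℓ_pos
  have h := measure_le hd hC₀ hg (Q.pow2 k)
  unfold th
  rw [div_le_iff₀ (by positivity)]
  refine (ENNReal.toReal_le_of_le_ofReal (by simp only [pow2]; positivity) h).trans ?_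
  simp only [pow2]
  rw [mul_pow (d:ℝ)]
  exact le_of_eq (by ring)

lemma th_le_of_subset (hd : 1 ≤ d) (hC₀ : 0 < C₀) (hg : GrowthBound μ n C₀) (Q R : CubeOf μ) (j k : ℕ)
    (h : (Q.pow2 j).set ⊆ (R.pow2 k).set) (h2 : 2 ^ k * R.ℓ ≤ 4 * (2 ^ j * Q.ℓ)) :
    Q.th n j ≤ 4 ^ n * R.th n k := by
  have hp := Q.ℓ_pos
  have hp' := R.ℓ_pos
  unfold th
  rw [← mul_div_assoc, div_le_div_iff₀ (by positivity) (by positivity)]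
  have h1 : (μ (Q.pow2 j).set).toReal ≤ (μ (R.pow2 k).set).toReal :=
    ENNReal.toReal_mono (measure_lt_top hd hC₀ hg _).ne (measure_mono h)
  have h3 : (2 ^ k * R.ℓ) ^ n ≤ 4 ^ n * (2 ^ j * Q.ℓ) ^ n := by
    rw [← mul_pow]
    exact pow_le_pow_left₀ (by positivity) h2 n
  calc _ ≤ (μ (R.pow2 k).set).toReal * (4 ^ n * (2 ^ j * Q.ℓ) ^ n) := by gcongr
    _ = _ := by ring

lemma Kcoef_eq (Q R : CubeOf μ) : Kcoef n Q R = 1 + ∑ k ∈ Finset.Icc 1 (NQR Q R), Q.th n k := rfl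

lemma one_le_K (Q R : CubeOf μ) : 1 ≤ Kcoef n Q R := by
  rw [Kcoef_eq]
  have := Finset.sum_nonneg (s := Finset.Icc 1 (NQR Q R)) (fun k _ => Q.th_nonneg (n := n) k)
  linarith

lemma NQR_set_nonempty (Q R : CubeOf μ) : {k : ℕ | 1 ≤ k ∧ R.ℓ ≤ 2 ^ k * Q.ℓ}.Nonempty := by
  obtain ⟨k, hk⟩ := pow_unbounded_of_one_lt (R.ℓ / Q.ℓ) (one_lt_two (α := ℝ))
  have hp := Q.ℓ_pos
  rw [div_lt_iff₀ hp] at hk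
  refine ⟨k + 1, by simp, ?_⟩
  have : (2:ℝ) ^ k ≤ 2 ^ (k+1) := pow_le_pow_right₀ (by norm_num) (by simp)
  nlinarith

lemma NQR_spec (Q R : CubeOf μ) : 1 ≤ NQR Q R ∧ R.ℓ ≤ 2 ^ NQR Q R * Q.ℓ :=
  Nat.sInf_mem (NQR_set_nonempty Q R)

lemma NQR_upper (Q R : CubeOf μ) (h : Q.ℓ ≤ R.ℓ) : 2 ^ NQR Q R * Q.ℓ ≤ 2 * R.ℓ := by
  have h1 := (NQR_spec Q R).1
  by_cases h2 : NQR Q R = 1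
  · rw [h2]; linarith
  · by_contra hc
    push Not at hc
    have : NQR Q R - 1 ∈ {k : ℕ | 1 ≤ k ∧ R.ℓ ≤ 2 ^ k * Q.ℓ} := by
      refine ⟨by omega, ?_⟩
      have e : NQR Q R = (NQR Q R - 1) + 1 := by omega
      rw [e, pow_succ] at hc
      linarith
    have := Nat.sInf_le this
    change NQR Q R ≤ _ at this
    omega

lemma K_le (Q R : CubeOf μ) (k : ℕ) (hk : 1 ≤ k) (h : R.ℓ ≤ 2 ^ k * Q.ℓ) :
    Kcoef n Q R ≤ 1 + ∑ k ∈ Finset.Icc 1 k, Q.th n k := by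
  rw [Kcoef_eq]
  refine add_le_add le_rfl ?_
  refine Finset.sum_le_sum_of_subset_of_nonneg ?_ (fun i _ _ => th_nonneg _ _)
  exact Finset.Icc_subset_Icc_right (Nat.sInf_le ⟨hk, h⟩)

lemma th_zero_pos (Q : CubeOf μ) (hd : 1 ≤ d) (hC₀ : 0 < C₀) (hg : GrowthBound μ n C₀) : 0 < Q.th n 0 := by
  unfold th
  have := ENNReal.toReal_pos (measure_pos (Q.pow2 0)).ne' (measure_lt_top hd hC₀ hg _).ne
  have hp := Q.ℓ_pos
  positivity

variable {βd : ℝ}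

lemma th_step (hd : 1 ≤ d) (hC₀ : 0 < C₀) (hg : GrowthBound μ n C₀) (hβ : (2 : ℝ) ^ n < βd)
    (Q : CubeOf μ) (k : ℕ) (h : ¬ IsDoubling μ 2 βd (Q.pow2 k)) :
    Q.th n k ≤ 2 ^ n / βd * Q.th n (k + 1) := by
  have hb : 0 < βd := lt_trans (by positivity) hβ
  have hp := Q.ℓ_pos
  unfold IsDoubling at h
  rw [dil_two, pow2_pow2] at h
  push Not at h
  have h' := ENNReal.toReal_mono (measure_lt_top hd hC₀ hg _).ne h.le
  rw [ENNReal.toReal_mul, ENNReal.toReal_ofReal hb.le] at h'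
  unfold th
  have e : ((2:ℝ) ^ (k + 1) * Q.ℓ) ^ n = 2 ^ n * (2 ^ k * Q.ℓ) ^ n := by
    rw [← mul_pow]; ring
  rw [e, div_mul_div_comm, mul_comm ((2:ℝ)^n), mul_comm ((2:ℝ)^n), ← mul_assoc,
    mul_div_mul_right _ _ (by positivity), div_le_div_iff₀ (by positivity) (by positivity)]
  calc _ = (βd * (μ (Q.pow2 k).set).toReal) * (2 ^ k * Q.ℓ) ^ n := by ring
    _ ≤ _ := by gcongr

lemma tilde_exists (hd : 1 ≤ d) (hC₀ : 0 < C₀) (hg : GrowthBound μ n C₀) (hβ : (2 : ℝ) ^ n < βd)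
    (Q : CubeOf μ) : {N : ℕ | IsDoubling μ 2 βd (Q.pow2 N)}.Nonempty := by
  by_contra hc
  rw [Set.not_nonempty_iff_eq_empty] at hc
  have hb : 0 < βd := lt_trans (by positivity) hβ
  have h : ∀ k, ¬ IsDoubling μ 2 βd (Q.pow2 k) := fun k hk => by
    have : k ∈ {N : ℕ | IsDoubling μ 2 βd (Q.pow2 N)} := hk
    rw [hc] at this; exact this
  have h1 : ∀ k, Q.th n 0 ≤ (2 ^ n / βd) ^ k * Q.th n k := by
    intro k
    induction k with
    | zero => simp
    | succ k ih =>
      refine ih.trans ?_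
      rw [pow_succ, mul_assoc]
      gcongr
      exact th_step hd hC₀ hg hβ Q k (h k)
  have h0 := Q.th_zero_pos hd hC₀ hg
  have h2 : ∀ k, Q.th n 0 ≤ (2 ^ n / βd) ^ k * (C₀ * d ^ n) := fun k => (h1 k).trans (by
    gcongr; exact th_le hd hC₀ hg Q k)
  have h3 : Filter.Tendsto (fun k : ℕ => ((2:ℝ) ^ n / βd) ^ k * (C₀ * d ^ n)) Filter.atTop (nhds (0 * (C₀ * d ^ n))) :=
    (tendsto_pow_atTop_nhds_zero_of_lt_one (by positivity) ((div_lt_one hb).2 hβ)).mul_const _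
  have := ge_of_tendsto' h3 h2
  linarith

lemma tilde_doubling (hd : 1 ≤ d) (hC₀ : 0 < C₀) (hg : GrowthBound μ n C₀) (hβ : (2 : ℝ) ^ n < βd)
    (Q : CubeOf μ) : IsDoubling μ 2 βd (Q.tilde βd) := Nat.sInf_mem (tilde_exists hd hC₀ hg hβ Q)

lemma geom_sum_le (u : ℕ → ℝ) (r : ℝ) (hr : 0 ≤ r) (hr1 : r < 1) (h0 : 0 ≤ u 0) (t : ℕ)
    (h : ∀ i < t, u i ≤ r * u (i + 1)) :
    ∑ i ∈ Finset.range (t + 1), u i ≤ u t / (1 - r) := by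
  have h1 : 0 < 1 - r := by linarith
  induction t with
  | zero =>
    simp only [zero_add, Finset.range_one, Finset.sum_singleton]
    rw [le_div_iff₀ h1]; nlinarith
  | succ t ih =>
    rw [Finset.sum_range_succ]
    have := ih (fun i hi => h i (by omega))
    have h2 := h t (by omega)
    rw [le_div_iff₀ h1] at this ⊢
    nlinarith

/-- the constant in the geometric bound -/
noncomputable def Gc (d n : ℕ) (C₀ βd : ℝ) : ℝ := C₀ * d ^ n / (1 - 2 ^ n / βd)

lemma sum_tilde (hd : 1 ≤ d) (hC₀ : 0 < C₀) (hg : GrowthBound μ n C₀) (hβ : (2 : ℝ) ^ n < βd)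
    (Q : CubeOf μ) : ∑ i ∈ Finset.range (tildeIdx μ βd Q + 1), Q.th n i ≤ Gc d n C₀ βd := by
  have hb : 0 < βd := lt_trans (by positivity) hβ
  have hr : (2:ℝ) ^ n / βd < 1 := (div_lt_one hb).2 hβ
  refine (geom_sum_le (Q.th n) (2 ^ n / βd) (by positivity) hr (Q.th_nonneg 0) _ ?_).trans ?_
  · intro i hi
    exact th_step hd hC₀ hg hβ Q i (Nat.notMem_of_lt_sInf hi)
  · unfold Gc
    have : 0 < 1 - (2:ℝ) ^ n / βd := by linarith
    gcongr
    exact th_le hd hC₀ hg Q _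

end CubeOf

namespace CubeOf

variable {d : ℕ} {μ : MeasureTheory.Measure (Euc d)} {n : ℕ} {C₀ βd : ℝ}

lemma K_self_le (hd : 1 ≤ d) (hC₀ : 0 < C₀) (hg : GrowthBound μ n C₀) (R : CubeOf μ) :
    Kcoef n R R ≤ 1 + C₀ * d ^ n := by
  have hp := R.ℓ_pos
  refine (K_le R R 1 le_rfl (by linarith)).trans ?_
  simp only [Finset.Icc_self, Finset.sum_singleton]
  linarith [th_le hd hC₀ hg R 1]

lemma K_tilde_le (hd : 1 ≤ d) (hC₀ : 0 < C₀) (hg : GrowthBound μ n C₀) (hβ : (2 : ℝ) ^ n < βd)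
    (Q : CubeOf μ) : Kcoef n Q (Q.tilde βd) ≤ 1 + Gc d n C₀ βd + C₀ * d ^ n := by
  have hp := Q.ℓ_pos
  refine (K_le Q (Q.tilde βd) (tildeIdx μ βd Q + 1) (by simp) ?_).trans ?_
  · simp only [tilde, pow2]
    have : (2:ℝ) ^ (tildeIdx μ βd Q) ≤ 2 ^ (tildeIdx μ βd Q + 1) :=
      pow_le_pow_right₀ (by norm_num) (by simp)
    gcongr
  · have h1 : ∑ k ∈ Finset.Icc 1 (tildeIdx μ βd Q + 1), Q.th n k
        ≤ ∑ k ∈ Finset.range (tildeIdx μ βd Q + 1 + 1), Q.th n k := by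
      refine Finset.sum_le_sum_of_subset_of_nonneg ?_ (fun i _ _ => th_nonneg _ _)
      intro i hi
      simp only [Finset.mem_Icc, Finset.mem_range] at hi ⊢
      omega
    rw [Finset.sum_range_succ] at h1
    have h2 := sum_tilde hd hC₀ hg hβ Q
    have h3 := th_le hd hC₀ hg Q (tildeIdx μ βd Q + 1)
    linarith

lemma Gc_nonneg (hC₀ : 0 < C₀) (hβ : (2 : ℝ) ^ n < βd) : 0 ≤ Gc d n C₀ βd := by
  have hb : 0 < βd := lt_trans (by positivity) hβ
  have hr : (2:ℝ) ^ n / βd < 1 := (div_lt_one hb).2 hβ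
  have : 0 < 1 - (2:ℝ) ^ n / βd := by linarith
  unfold Gc
  positivity

/-- the constant in the chain estimate -/
noncomputable def Tc (d n : ℕ) (C₀ βd : ℝ) : ℝ :=
  2 * Gc d n C₀ βd + 4 ^ n * Gc d n C₀ βd + 2 * (C₀ * d ^ n)

lemma sum_range_max_le (u : ℕ → ℝ) (hu : ∀ i, 0 ≤ u i) (a b : ℕ) :
    ∑ i ∈ Finset.range (max a b), u i ≤ ∑ i ∈ Finset.range a, u i + ∑ i ∈ Finset.range b, u i := by
  rcases le_total a b with h | h
  · rw [max_eq_right h]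
    linarith [Finset.sum_nonneg (s := Finset.range a) fun i _ => hu i]
  · rw [max_eq_left h]
    linarith [Finset.sum_nonneg (s := Finset.range b) fun i _ => hu i]

lemma common (hd : 1 ≤ d) (hC₀ : 0 < C₀) (hg : GrowthBound μ n C₀) (hβ : (2 : ℝ) ^ n < βd)
    (Q R : CubeOf μ) (h : Q.set ⊆ R.set) :
    ∃ P : CubeOf μ, IsDoubling μ 2 βd P ∧ (Q.tilde βd).set ⊆ P.set ∧ (R.tilde βd).set ⊆ P.set ∧
      Kcoef n (Q.tilde βd) P ≤ Kcoef n Q R + 4 ^ n * (Tc d n C₀ βd + 2 * (C₀ * d ^ n)) ∧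
      Kcoef n (R.tilde βd) P ≤ 1 + Tc d n C₀ βd + C₀ * d ^ n := by
  set a := tildeIdx μ βd Q with ha
  set b := tildeIdx μ βd R with hb
  set N := NQR Q R with hN
  set m := max b (a - N + 2) with hm
  set t := tildeIdx μ βd (R.pow2 m) with ht
  have hQp := Q.ℓ_pos
  have hRp := R.ℓ_pos
  have hc := of_set_subset Q R h
  have hQR : Q.ℓ ≤ R.ℓ := by
    have := hc ⟨0, hd⟩
    have := abs_nonneg (Q.c ⟨0, hd⟩ - R.c ⟨0, hd⟩)
    linarith
  have hN1 : 1 ≤ N := (NQR_spec Q R).1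
  have hN2 : R.ℓ ≤ 2 ^ N * Q.ℓ := (NQR_spec Q R).2
  have hN3 : 2 ^ N * Q.ℓ ≤ 2 * R.ℓ := NQR_upper Q R hQR
  have hcR : ∀ i, |Q.c i - R.c i| ≤ R.ℓ / 2 := fun i => by have := hc i; linarith
  -- comparison of densities
  have cmp1 : ∀ i, Q.th n (N + i) ≤ 4 ^ n * R.th n (i + 2) := by
    intro i
    have h1 : (1:ℝ) ≤ 2 ^ i := one_le_pow₀ (by norm_num)
    have e1 : (2:ℝ) ^ (N + i) * Q.ℓ = 2 ^ i * (2 ^ N * Q.ℓ) := by ring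
    apply th_le_of_subset hd hC₀ hg
    · apply set_subset_of
      intro j
      simp only [pow2]
      rw [e1]
      have := hcR j
      have e2 : (2:ℝ) ^ (i + 2) * R.ℓ = 2 ^ i * (4 * R.ℓ) := by ring
      rw [e2]
      have h3 : (2:ℝ) ^ i * (2 ^ N * Q.ℓ) ≤ 2 ^ i * (2 * R.ℓ) := by gcongr
      have h4 : R.ℓ ≤ 2 ^ i * R.ℓ := by nlinarith
      linarith
    · rw [e1]
      have e2 : (2:ℝ) ^ (i + 2) * R.ℓ = 4 * (2 ^ i * R.ℓ) := by ring
      rw [e2]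
      gcongr
  have cmp2 : ∀ i, R.th n i ≤ 4 ^ n * Q.th n (N + 1 + i) := by
    intro i
    have h1 : (1:ℝ) ≤ 2 ^ i := one_le_pow₀ (by norm_num)
    have e1 : (2:ℝ) ^ (N + 1 + i) * Q.ℓ = 2 ^ i * (2 * (2 ^ N * Q.ℓ)) := by ring
    apply th_le_of_subset hd hC₀ hg
    · apply set_subset_of
      intro j
      simp only [pow2]
      rw [e1, abs_sub_comm]
      have := hcR j
      have h3 : (2:ℝ) ^ i * (2 * R.ℓ) ≤ 2 ^ i * (2 * (2 ^ N * Q.ℓ)) := by gcongr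
      have h4 : R.ℓ ≤ 2 ^ i * R.ℓ := by nlinarith
      linarith
    · rw [e1]
      have h3 : (2:ℝ) ^ i * (2 * (2 ^ N * Q.ℓ)) ≤ 2 ^ i * (2 * (2 * R.ℓ)) := by gcongr
      linarith
  have hG := Gc_nonneg (d := d) hC₀ hβ
  have hC1 := fun i => th_le hd hC₀ hg R i
  have hnn : ∀ i, 0 ≤ R.th n i := fun i => th_nonneg _ _
  have hnnQ : ∀ i, 0 ≤ Q.th n i := fun i => th_nonneg _ _
  -- the sum T
  have hT : ∑ i ∈ Finset.range (m + t + 1), R.th n i ≤ Tc d n C₀ βd := by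
    rw [add_assoc, Finset.sum_range_add]
    have s1 : ∑ x ∈ Finset.range (t + 1), R.th n (m + x) ≤ Gc d n C₀ βd := by
      have := sum_tilde hd hC₀ hg hβ (R.pow2 m)
      simpa only [th_pow2] using this
    have s2 := sum_range_max_le (R.th n) hnn b (a - N + 2)
    have s3 := sum_tilde hd hC₀ hg hβ R
    rw [← hb, Finset.sum_range_succ] at s3
    have s4 : ∑ i ∈ Finset.range (a - N), R.th n i ≤ 4 ^ n * Gc d n C₀ βd := by
      by_cases hNa : N ≤ a
      · calc _ ≤ ∑ i ∈ Finset.range (a - N), 4 ^ n * Q.th n (N + 1 + i) :=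
              Finset.sum_le_sum fun i _ => cmp2 i
          _ = 4 ^ n * ∑ i ∈ Finset.range (a - N), Q.th n (N + 1 + i) := by rw [Finset.mul_sum]
          _ ≤ 4 ^ n * Gc d n C₀ βd := by
              gcongr
              refine le_trans ?_ (sum_tilde hd hC₀ hg hβ Q)
              rw [← ha, show a + 1 = (N + 1) + (a - N) by omega, Finset.sum_range_add]
              linarith [Finset.sum_nonneg (s := Finset.range (N + 1)) fun i _ => hnnQ i]
      · rw [show a - N = 0 by omega]
        simp only [Finset.range_zero, Finset.sum_empty]
        positivity
    rw [Finset.sum_range_succ, Finset.sum_range_succ] at s2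
    have := hC1 (a - N)
    have := hC1 (a - N + 1)
    have := hnn b
    unfold Tc
    linarith
  have hp2 : a - N + 2 ≤ m + t := by omega
  have hbm : b ≤ m + t := by omega
  refine ⟨(R.pow2 m).tilde βd, tilde_doubling hd hC₀ hg hβ _, ?_, ?_, ?_, ?_⟩
  · rw [tilde, tilde, ← ha, ← ht, pow2_pow2]
    apply set_subset_of
    intro j
    simp only [pow2]
    have := hcR j
    have h1 : (2:ℝ) ^ a * Q.ℓ ≤ 2 ^ (a - N) * (2 ^ N * Q.ℓ) := by
      rw [← mul_assoc, ← pow_add]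
      gcongr
      · norm_num
      · omega
    have h2 : (2:ℝ) ^ (a - N) * (2 ^ N * Q.ℓ) ≤ 2 ^ (a - N) * (2 * R.ℓ) := by gcongr
    have h3 : (2:ℝ) ^ (a - N + 2) * R.ℓ ≤ 2 ^ (m + t) * R.ℓ := by
      gcongr
      norm_num
    have h4 : R.ℓ ≤ 2 ^ (a - N) * R.ℓ := by
      have h1 : (1:ℝ) ≤ 2 ^ (a - N) := one_le_pow₀ (by norm_num)
      nlinarith
    rw [pow_add] at h3
    linarith
  · rw [tilde, tilde, ← hb, ← ht, pow2_pow2]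
    apply set_subset_of
    intro j
    simp only [pow2, sub_self, abs_zero, zero_add]
    gcongr
    norm_num
  · rw [tilde, tilde, ← ha, ← ht, pow2_pow2]
    refine (K_le _ _ (m + t + N - a) (by omega) ?_).trans ?_
    · simp only [pow2]
      rw [← mul_assoc, ← pow_add, show m + t + N - a + a = m + t + N by omega, pow_add 2 (m + t) N, mul_assoc]
      exact mul_le_mul_of_nonneg_left hN2 (by positivity)
    · rw [Kcoef_eq, add_assoc 1]
      refine add_le_add le_rfl ?_
      simp only [th_pow2]
      have k1 : ∑ k ∈ Finset.Icc 1 (m + t + N - a), Q.th n (a + k) ≤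
          ∑ k ∈ Finset.Icc 1 (N + (m + t)), Q.th n k := by
        rw [← Finset.sum_image (f := fun k => Q.th n k) (g := fun k => a + k)
          (by intro x _ y _ hxy; simpa using hxy)]
        refine Finset.sum_le_sum_of_subset_of_nonneg ?_ (fun i _ _ => th_nonneg _ _)
        intro i hi
        simp only [Finset.mem_image, Finset.mem_Icc] at hi ⊢
        omega
      have k2 : ∀ q, ∑ k ∈ Finset.Icc 1 (N + q), Q.th n k ≤
          ∑ k ∈ Finset.Icc 1 N, Q.th n k + 4 ^ n * ∑ i ∈ Finset.range (q + 3), R.th n i := by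
        intro q
        induction q with
        | zero =>
          simp only [add_zero]
          have : 0 ≤ ∑ i ∈ Finset.range (0 + 3), R.th n i := Finset.sum_nonneg fun i _ => hnn i
          have : 0 ≤ 4 ^ n * ∑ i ∈ Finset.range (0 + 3), R.th n i := by positivity
          linarith
        | succ q ih =>
          rw [← add_assoc, Finset.sum_Icc_succ_top (by omega), show q + 1 + 3 = q + 3 + 1 by ring,
            Finset.sum_range_succ, mul_add]
          have := cmp1 (q + 1)
          rw [← add_assoc] at this
          linarith
      have k3 := k2 (m + t)
      rw [show m + t + 3 = m + t + 1 + 1 + 1 by ring, Finset.sum_range_succ, Finset.sum_range_succ] at k3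
      refine k1.trans (k3.trans ?_)
      refine add_le_add le_rfl (mul_le_mul_of_nonneg_left ?_ (by positivity))
      linarith [hC1 (m + t + 1), hC1 (m + t + 1 + 1)]
  · rw [tilde, tilde, ← hb, ← ht, pow2_pow2]
    refine (K_le _ _ (m + t - b + 1) (by omega) ?_).trans ?_
    · simp only [pow2]
      rw [← mul_assoc, ← pow_add]
      exact mul_le_mul_of_nonneg_right (pow_le_pow_right₀ (by norm_num) (by omega)) hRp.le
    · rw [add_assoc 1]
      refine add_le_add le_rfl ?_
      simp only [th_pow2]
      have k1 : ∑ k ∈ Finset.Icc 1 (m + t - b + 1), R.th n (b + k) ≤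
          ∑ k ∈ Finset.range (m + t + 1 + 1), R.th n k := by
        rw [← Finset.sum_image (f := fun k => R.th n k) (g := fun k => b + k)
          (by intro x _ y _ hxy; simpa using hxy)]
        refine Finset.sum_le_sum_of_subset_of_nonneg ?_ (fun i _ _ => th_nonneg _ _)
        intro i hi
        simp only [Finset.mem_image, Finset.mem_Icc, Finset.mem_range] at hi ⊢
        omega
      rw [Finset.sum_range_succ] at k1
      linarith [hC1 (m + t + 1)]

end CubeOf

namespace CubeOf

variable {d : ℕ} {μ : MeasureTheory.Measure (Euc d)} {n : ℕ} {C₀ βd : ℝ}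

/-- the dual norm -/
noncomputable def Sd (μ : MeasureTheory.Measure (Euc d)) (n : ℕ) (g : Euc d → ℝ) : ℝ≥0∞ :=
  ⨆ (B : AtomicBlock μ n) (_ : B.size ≤ 1), ENNReal.ofReal |∫ x, B.b x * g x ∂μ|

lemma scale_block (g : Euc d → ℝ) (B : AtomicBlock μ n) (L : ℝ) (hL : 0 < L) (hs : B.size ≤ L) :
    ENNReal.ofReal |∫ x, B.b x * g x ∂μ| ≤ ENNReal.ofReal L * Sd μ n g := by
  let B' : AtomicBlock μ n :=
    { b := fun x => L⁻¹ * B.b x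
      R := B.R
      lam := fun j => L⁻¹ * B.lam j
      a := B.a
      Qj := B.Qj
      integrable := B.integrable.const_mul _
      supp_b := fun x hx => by simp [B.supp_b x hx]
      int_zero := by rw [integral_const_mul, B.int_zero, mul_zero]
      Qj_sub := B.Qj_sub
      a_supp := B.a_supp
      a_meas := B.a_meas
      a_bound := B.a_bound
      lam_summable := by
        simp only [abs_mul]
        exact B.lam_summable.mul_left _
      b_eq := by
        filter_upwards [B.b_eq] with x hx
        simpa only [mul_assoc] using hx.mul_left L⁻¹ }
  have h1 : B'.size ≤ 1 := by
    change ∑' j, |L⁻¹ * B.lam j| ≤ 1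
    simp only [abs_mul]
    rw [tsum_mul_left, abs_of_pos (inv_pos.2 hL)]
    change L⁻¹ * B.size ≤ 1
    rw [inv_mul_le_iff₀ hL]; simpa using hs
  have h2 : ENNReal.ofReal |∫ x, B'.b x * g x ∂μ| ≤ Sd μ n g :=
    le_iSup₂_of_le B' h1 le_rfl
  have h3 : ∫ x, B.b x * g x ∂μ = L * ∫ x, B'.b x * g x ∂μ := by
    rw [← integral_const_mul]
    congr 1
    ext x
    change _ = L * (L⁻¹ * B.b x * g x)
    field_simp
  rw [h3, abs_mul, abs_of_pos hL, ENNReal.ofReal_mul hL.le]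
  gcongr

lemma dil_toReal_pos (hd : 1 ≤ d) (hC₀ : 0 < C₀) (hg : GrowthBound μ n C₀) (Q : CubeOf μ) :
    0 < (μ (Q.dil 2)).toReal := by
  rw [dil_two]
  exact ENNReal.toReal_pos (measure_pos _).ne' (measure_lt_top hd hC₀ hg _).ne

lemma atom_bound (hd : 1 ≤ d) (hC₀ : 0 < C₀) (hg : GrowthBound μ n C₀) (Q R : CubeOf μ)
    (f : Euc d → ℝ) (hf : ∀ x, |f x| ≤ ((μ (Q.dil 2)).toReal * Kcoef n Q R)⁻¹) :
    MeasureTheory.eLpNorm f ⊤ μ ≤ (μ (Q.dil 2) * ENNReal.ofReal (Kcoef n Q R))⁻¹ := by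
  have h1 := dil_toReal_pos hd hC₀ hg Q
  have h2 := one_le_K (n := n) Q R
  have h3 : μ (Q.dil 2) ≠ ⊤ := by
    rw [dil_two]; exact (measure_lt_top hd hC₀ hg _).ne
  have e : μ (Q.dil 2) * ENNReal.ofReal (Kcoef n Q R) =
      ENNReal.ofReal ((μ (Q.dil 2)).toReal * Kcoef n Q R) := by
    rw [ENNReal.ofReal_mul h1.le, ENNReal.ofReal_toReal h3]
  rw [e, ← ENNReal.ofReal_inv_of_pos (by positivity), eLpNorm_exponent_top]
  refine eLpNormEssSup_le_of_ae_bound ?_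
  exact Filter.Eventually.of_forall hf

lemma two_atom (hd : 1 ≤ d) (hC₀ : 0 < C₀) (hg : GrowthBound μ n C₀) (Q R : CubeOf μ)
    (hQR : Q.set ⊆ R.set) (φ : Euc d → ℝ) (hm : AEStronglyMeasurable φ μ) (A : ℝ) (hA0 : 0 < A)
    (hA : ∀ x, |φ x| ≤ A) (hs : ∀ x ∉ Q.set, φ x = 0) (c : ℝ)
    (hc : ∫ x, φ x ∂μ = c * (μ R.set).toReal) (hi : Integrable φ μ) :
    ∃ B : AtomicBlock μ n, (B.b = fun x => φ x - R.set.indicator (fun _ => c) x) ∧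
      B.size ≤ A * ((μ (Q.dil 2)).toReal * Kcoef n Q R) +
        |c| * ((μ (R.dil 2)).toReal * Kcoef n R R) := by
  have p1 := dil_toReal_pos hd hC₀ hg Q
  have p2 := one_le_K (n := n) Q R
  have p3 := dil_toReal_pos hd hC₀ hg R
  have p4 := one_le_K (n := n) R R
  set w1 := (μ (Q.dil 2)).toReal * Kcoef n Q R with hw1
  set w2 := (μ (R.dil 2)).toReal * Kcoef n R R with hw2
  have q1 : 0 < w1 := by positivity
  have q2 : 0 < w2 := by positivity
  have hci : Integrable (R.set.indicator (fun _ => c)) μ := by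
    rw [integrable_indicator_iff R.set_meas]
    exact integrableOn_const (measure_lt_top hd hC₀ hg R).ne
  let lam : ℕ → ℝ := fun j => match j with
    | 0 => A * w1
    | 1 => -(c * w2)
    | _ + 2 => 0
  let a : ℕ → Euc d → ℝ := fun j => match j with
    | 0 => fun x => (A * w1)⁻¹ * φ x
    | 1 => R.set.indicator (fun _ => w2⁻¹)
    | _ + 2 => fun _ => 0
  let Qj : ℕ → CubeOf μ := fun j => match j with
    | 0 => Q
    | _ + 1 => R
  have hlam : HasSum (fun j => |lam j|) (∑ j ∈ Finset.range 2, |lam j|) := by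
    apply hasSum_sum_of_ne_finset_zero
    intro j hj
    match j with
    | 0 => simp at hj
    | 1 => simp at hj
    | j + 2 => simp [lam]
  refine ⟨{ b := fun x => φ x - R.set.indicator (fun _ => c) x
            R := R
            lam := lam
            a := a
            Qj := Qj
            integrable := hi.sub hci
            supp_b := ?_
            int_zero := ?_
            Qj_sub := ?_
            a_supp := ?_
            a_meas := ?_
            a_bound := ?_
            lam_summable := hlam.summable
            b_eq := ?_ }, rfl, ?_⟩
  · intro x hx
    simp [hx, hs x (fun h => hx (hQR h))]
  · rw [integral_sub hi hci, hc, integral_indicator R.set_meas, setIntegral_const, smul_eq_mul,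
      Measure.real]
    ring
  · intro j
    match j with
    | 0 => exact hQR
    | j + 1 => exact subset_rfl
  · intro j x hx
    match j with
    | 0 => simp [a, hs x hx]
    | 1 => exact Set.indicator_of_notMem hx _
    | j + 2 => rfl
  · intro j
    match j with
    | 0 => exact hm.const_mul _
    | 1 => exact (aestronglyMeasurable_const.indicator R.set_meas)
    | j + 2 => exact aestronglyMeasurable_const
  · intro j
    match j with
    | 0 =>
      refine atom_bound hd hC₀ hg Q R _ fun x => ?_
      rw [← hw1]
      simp only [a]
      rw [abs_mul, abs_of_pos (by positivity), mul_inv]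
      have := hA x
      calc A⁻¹ * w1⁻¹ * |φ x| ≤ A⁻¹ * w1⁻¹ * A := by gcongr
        _ = w1⁻¹ := by field_simp
    | 1 =>
      refine atom_bound hd hC₀ hg R R _ fun x => ?_
      rw [← hw2]
      simp only [a]
      by_cases hx : x ∈ R.set
      · simp [hx, abs_of_pos q2]
      · simp [hx, q2.le]
    | j + 2 =>
      change eLpNorm (fun _ => (0:ℝ)) ⊤ μ ≤ _
      simp only [eLpNorm_zero', zero_le]
  · refine Filter.Eventually.of_forall fun x => ?_
    have : φ x - R.set.indicator (fun _ => c) x = ∑ j ∈ Finset.range 2, lam j * a j x := by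
      simp only [Finset.sum_range_succ, Finset.range_zero, Finset.sum_empty, lam, a]
      by_cases hx : x ∈ R.set
      · simp [hx]; field_simp; ring
      · simp [hx]; field_simp
    rw [this]
    apply hasSum_sum_of_ne_finset_zero
    intro j hj
    match j with
    | 0 => simp at hj
    | 1 => simp at hj
    | j + 2 => simp [lam]
  · change ∑' j, |lam j| ≤ _
    rw [hlam.tsum_eq]
    simp only [Finset.sum_range_succ, Finset.range_zero, Finset.sum_empty, lam, zero_add]
    rw [abs_neg, abs_mul c, abs_of_pos q2, abs_of_pos (by positivity)]

end CubeOf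

namespace CubeOf

variable {d : ℕ} {μ : MeasureTheory.Measure (Euc d)} {n : ℕ} {C₀ βd : ℝ}

lemma integrableOn_cube (g : Euc d → ℝ) (hgi : LocallyIntegrable g μ) (Q : CubeOf μ) :
    IntegrableOn g Q.set μ := by
  have hp := Q.ℓ_pos
  have hsub : Q.set ⊆ Metric.closedBall Q.c (d * Q.ℓ) := by
    intro y hy
    rw [Metric.mem_closedBall, EuclideanSpace.dist_eq, Real.sqrt_le_left (by positivity)]
    calc ∑ i, dist (y i) (Q.c i) ^ 2 ≤ ∑ i : Fin d, (Q.ℓ / 2) ^ 2 := by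
          refine Finset.sum_le_sum fun i _ => ?_
          rw [Real.dist_eq]
          exact pow_le_pow_left₀ (abs_nonneg _) (hy i) 2
      _ = d * (Q.ℓ / 2) ^ 2 := by simp
      _ ≤ (d * Q.ℓ) ^ 2 := by
          rw [mul_pow]
          have : (d:ℝ) ≤ d ^ 2 := by exact_mod_cast Nat.le_self_pow (by norm_num) d
          nlinarith [sq_nonneg Q.ℓ, mul_le_mul_of_nonneg_right this (sq_nonneg Q.ℓ),
            mul_nonneg (Nat.cast_nonneg (α := ℝ) d) (sq_nonneg Q.ℓ)]
  exact (hgi.integrableOn_isCompact (isCompact_closedBall _ _)).mono_set hsub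

lemma doubling_toReal (hd : 1 ≤ d) (hC₀ : 0 < C₀) (hg : GrowthBound μ n C₀) (hb : 0 < βd)
    (Q : CubeOf μ) (h : IsDoubling μ 2 βd Q) :
    (μ (Q.dil 2)).toReal ≤ βd * (μ Q.set).toReal := by
  have := ENNReal.toReal_mono (ENNReal.mul_ne_top ENNReal.ofReal_ne_top
    (measure_lt_top hd hC₀ hg Q).ne) h
  rwa [ENNReal.toReal_mul, ENNReal.toReal_ofReal hb.le] at this

lemma mQ_mul (hd : 1 ≤ d) (hC₀ : 0 < C₀) (hg : GrowthBound μ n C₀) (Q : CubeOf μ) (g : Euc d → ℝ) :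
    ∫ x in Q.set, g x ∂μ = (μ Q.set).toReal * mQ μ Q g := by
  have hp := ENNReal.toReal_pos (measure_pos Q).ne' (measure_lt_top hd hC₀ hg Q).ne
  rw [mQ, setAverage_eq, smul_eq_mul, Measure.real]
  field_simp

lemma lower (hd : 1 ≤ d) (hC₀ : 0 < C₀) (hg : GrowthBound μ n C₀) (hβ : (2 : ℝ) ^ n < βd)
    (g : Euc d → ℝ) (hgi : LocallyIntegrable g μ) :
    RBMOBoundWith μ n βd g (ENNReal.ofReal
      (1 + Gc d n C₀ βd + C₀ * d ^ n + βd + βd * (1 + C₀ * d ^ n)) * Sd μ n g) := by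
  have hb : 0 < βd := lt_trans (by positivity) hβ
  have hG := Gc_nonneg (d := d) hC₀ hβ
  constructor
  · intro Q
    set R := Q.tilde βd with hR
    have hQR : Q.set ⊆ R.set := set_subset_pow2 Q _
    have hRd : IsDoubling μ 2 βd R := tilde_doubling hd hC₀ hg hβ Q
    set c0 := mQ μ R g with hc0
    have hgm : AEStronglyMeasurable g μ := hgi.aestronglyMeasurable
    have mQt := (measure_lt_top hd hC₀ hg Q).ne
    have mRt := (measure_lt_top hd hC₀ hg R).ne
    have pR := ENNReal.toReal_pos (measure_pos R).ne' mRt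
    have pQ := ENNReal.toReal_pos (measure_pos Q).ne' mQt
    have pQ2 := dil_toReal_pos hd hC₀ hg Q
    set φ : Euc d → ℝ := Q.set.indicator (fun x => (g x - c0) / |g x - c0|) with hφ
    have hφm : AEStronglyMeasurable φ μ := by
      refine AEStronglyMeasurable.indicator ?_ Q.set_meas
      have : AEMeasurable (fun x => g x - c0) μ := hgm.aemeasurable.sub_const c0
      exact (this.div (measurable_abs.comp_aemeasurable this)).aestronglyMeasurable
    have hφ1 : ∀ x, |φ x| ≤ 1 := by
      intro x
      by_cases hx : x ∈ Q.set
      · simp only [hφ, Set.indicator_of_mem hx, abs_div, abs_abs]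
        exact div_self_le_one _
      · simp [hφ, hx]
    have hφs : ∀ x ∉ Q.set, φ x = 0 := fun x hx => Set.indicator_of_notMem hx _
    have hind : Integrable (Q.set.indicator (fun _ => (1:ℝ))) μ := by
      rw [integrable_indicator_iff Q.set_meas]
      exact integrableOn_const mQt
    have hφle : ∀ x, ‖φ x‖ ≤ Q.set.indicator (fun _ => (1:ℝ)) x := by
      intro x
      by_cases hx : x ∈ Q.set
      · rw [Set.indicator_of_mem hx]; exact hφ1 x
      · rw [hφs x hx, Set.indicator_of_notMem hx]; simp
    have hφi : Integrable φ μ := hind.mono' hφm (Filter.Eventually.of_forall hφle)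
    have hI : |∫ x, φ x ∂μ| ≤ (μ Q.set).toReal := by
      have := norm_integral_le_of_norm_le hind (Filter.Eventually.of_forall hφle)
      refine this.trans (le_of_eq ?_)
      rw [integral_indicator Q.set_meas, setIntegral_const, smul_eq_mul, mul_one, Measure.real]
    set I := ∫ x, φ x ∂μ with hIdef
    set c := I / (μ R.set).toReal with hc
    obtain ⟨B, hB, hBs⟩ := two_atom hd hC₀ hg Q R hQR φ hφm 1 one_pos hφ1 hφs c
      (by rw [hc]; field_simp; rfl) hφi
    have hgR := integrableOn_cube g hgi R
    have hgQ := integrableOn_cube g hgi Q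
    have hhQ : IntegrableOn (fun x => |g x - c0|) Q.set μ :=
      (hgQ.sub (integrableOn_const mQt)).abs
    have e1 : ∀ x, B.b x * g x = Q.set.indicator (fun x => |g x - c0|) x + c0 * φ x
        - c * R.set.indicator g x := by
      intro x
      rw [hB]
      by_cases hx : x ∈ Q.set
      · have hxR := hQR hx
        simp only [hφ, Set.indicator_of_mem hx, Set.indicator_of_mem hxR]
        have : (g x - c0) / |g x - c0| * (g x - c0) = |g x - c0| := by
          by_cases h0 : g x - c0 = 0
          · simp [h0]
          · have : |g x - c0| ≠ 0 := abs_ne_zero.2 h0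
            field_simp
            rw [sq_abs]
        linear_combination this
      · rw [Set.indicator_of_notMem hx]
        simp only [hφs x hx]
        by_cases hxR : x ∈ R.set
        · simp [hxR]
        · simp [hxR]
    have e2 : ∫ x, B.b x * g x ∂μ = ∫ x in Q.set, |g x - c0| ∂μ := by
      simp only [e1]
      have i1 : Integrable (Q.set.indicator (fun x => |g x - c0|)) μ := hhQ.integrable_indicator Q.set_meas
      have i2 : Integrable (fun x => c0 * φ x) μ := hφi.const_mul _
      have i3 : Integrable (fun x => c * R.set.indicator g x) μ :=
        (hgR.integrable_indicator R.set_meas).const_mul _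
      have i12 : Integrable (fun x => Q.set.indicator (fun x => |g x - c0|) x + c0 * φ x) μ :=
        i1.add i2
      rw [integral_sub i12 i3, integral_add i1 i2, integral_const_mul, integral_const_mul,
        integral_indicator Q.set_meas, integral_indicator R.set_meas, mQ_mul hd hC₀ hg R, ← hIdef,
        ← hc0, hc]
      field_simp
      ring
    have e3 : ∫⁻ x in Q.set, ENNReal.ofReal |g x - c0| ∂μ = ENNReal.ofReal |∫ x, B.b x * g x ∂μ| := by
      rw [e2, abs_of_nonneg (integral_nonneg fun _ => abs_nonneg _),
        ofReal_integral_eq_lintegral_ofReal hhQ (Filter.Eventually.of_forall fun _ => abs_nonneg _)]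
    rw [e3]
    have hL : B.size ≤ (1 + Gc d n C₀ βd + C₀ * d ^ n + βd + βd * (1 + C₀ * d ^ n)) *
        (μ (Q.dil 2)).toReal := by
      refine hBs.trans ?_
      have k1 := K_tilde_le hd hC₀ hg hβ Q
      have k2 := K_self_le hd hC₀ hg R
      have k2' := one_le_K (n := n) R R
      have k3 := doubling_toReal hd hC₀ hg hb R hRd
      have k4 : (μ Q.set).toReal ≤ (μ (Q.dil 2)).toReal :=
        ENNReal.toReal_mono (by rw [dil_two]; exact (measure_lt_top hd hC₀ hg _).ne)
          (measure_mono Q.set_subset_dil)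
      have k5 : |c| * (μ (R.dil 2)).toReal ≤ βd * (μ (Q.dil 2)).toReal := by
        calc |c| * (μ (R.dil 2)).toReal ≤ |c| * (βd * (μ R.set).toReal) := by gcongr
          _ = βd * |I| := by
            rw [hc, abs_div, abs_of_pos pR]; field_simp
          _ ≤ βd * (μ (Q.dil 2)).toReal := by gcongr; exact hI.trans k4
      have k6 : |c| * (μ (R.dil 2)).toReal * Kcoef n R R ≤
          βd * (μ (Q.dil 2)).toReal * (1 + C₀ * d ^ n) := by gcongr
      have k7 : (μ (Q.dil 2)).toReal * Kcoef n Q R ≤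
        (μ (Q.dil 2)).toReal * (1 + Gc d n C₀ βd + C₀ * d ^ n) := by gcongr
      nlinarith [mul_pos hb pQ2]
    refine (scale_block g B _ (by positivity) hL).trans (le_of_eq ?_)
    rw [ENNReal.ofReal_mul (by positivity), ENNReal.ofReal_toReal
      (by rw [dil_two]; exact (measure_lt_top hd hC₀ hg _).ne)]
    ring
  · intro Q R hQR hQd hRd
    have mQt := (measure_lt_top hd hC₀ hg Q).ne
    have mRt := (measure_lt_top hd hC₀ hg R).ne
    have pR := ENNReal.toReal_pos (measure_pos R).ne' mRt
    have pQ := ENNReal.toReal_pos (measure_pos Q).ne' mQt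
    have hgR := integrableOn_cube g hgi R
    have hgQ := integrableOn_cube g hgi Q
    set q := (μ Q.set).toReal with hq
    set r := (μ R.set).toReal with hr
    have hφi : Integrable (Q.set.indicator (fun _ => q⁻¹)) μ := by
      rw [integrable_indicator_iff Q.set_meas]
      exact integrableOn_const mQt
    obtain ⟨B, hB, hBs⟩ := two_atom hd hC₀ hg Q R hQR (Q.set.indicator (fun _ => q⁻¹))
      hφi.aestronglyMeasurable q⁻¹ (by positivity) (by
        intro x
        by_cases hx : x ∈ Q.set
        · simp [hx, abs_of_pos pQ]
        · simp [hx, pQ.le]) (fun x hx => Set.indicator_of_notMem hx _) r⁻¹ (by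
        rw [integral_indicator Q.set_meas, setIntegral_const, smul_eq_mul, Measure.real, ← hq, ← hr]
        field_simp) hφi
    have e2 : ∫ x, B.b x * g x ∂μ = mQ μ Q g - mQ μ R g := by
      have e1 : ∀ x, B.b x * g x = q⁻¹ * Q.set.indicator g x - r⁻¹ * R.set.indicator g x := by
        intro x
        rw [hB]
        by_cases hx : x ∈ Q.set <;> by_cases hxR : x ∈ R.set <;> simp [hx, hxR]
        ring
      simp only [e1]
      rw [integral_sub ((hgQ.integrable_indicator Q.set_meas).const_mul _)
        ((hgR.integrable_indicator R.set_meas).const_mul _), integral_const_mul, integral_const_mul,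
        integral_indicator Q.set_meas, integral_indicator R.set_meas, mQ_mul hd hC₀ hg,
        mQ_mul hd hC₀ hg, ← hq, ← hr]
      field_simp
    rw [← e2]
    have kk := one_le_K (n := n) Q R
    have hL : B.size ≤ (1 + Gc d n C₀ βd + C₀ * d ^ n + βd + βd * (1 + C₀ * d ^ n)) *
        Kcoef n Q R := by
      refine hBs.trans ?_
      have k2 := K_self_le hd hC₀ hg R
      have k2' := one_le_K (n := n) R R
      have k3 := doubling_toReal hd hC₀ hg hb R hRd
      have k4 := doubling_toReal hd hC₀ hg hb Q hQd
      rw [← hr] at k3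
      rw [← hq] at k4
      have k5 : q⁻¹ * ((μ (Q.dil 2)).toReal * Kcoef n Q R) ≤ βd * Kcoef n Q R := by
        rw [← mul_assoc]
        gcongr
        rw [inv_mul_le_iff₀ pQ]; linarith
      have k6 : |r⁻¹| * ((μ (R.dil 2)).toReal * Kcoef n R R) ≤ βd * (1 + C₀ * d ^ n) := by
        rw [← mul_assoc, abs_of_pos (by positivity)]
        gcongr
        rw [inv_mul_le_iff₀ pR]; linarith
      have k7 : βd * (1 + C₀ * d ^ n) ≤ βd * (1 + C₀ * d ^ n) * Kcoef n Q R :=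
        le_mul_of_one_le_right (by positivity) kk
      have k8 : 0 ≤ (1 + Gc d n C₀ βd + C₀ * d ^ n) * Kcoef n Q R := by positivity
      linarith
    refine (scale_block g B _ (by positivity) hL).trans (le_of_eq ?_)
    rw [ENNReal.ofReal_mul (by positivity)]
    ring

/-- constant in the comparison of means -/
noncomputable def Dc (d n : ℕ) (C₀ βd : ℝ) : ℝ :=
  1 + 4 ^ n * (Tc d n C₀ βd + 2 * (C₀ * d ^ n)) + (1 + Tc d n C₀ βd + C₀ * d ^ n)

lemma Tc_nonneg (hC₀ : 0 < C₀) (hβ : (2 : ℝ) ^ n < βd) : 0 ≤ Tc d n C₀ βd := by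
  have hG := Gc_nonneg (d := d) hC₀ hβ
  unfold Tc; positivity

lemma Dc_nonneg (hC₀ : 0 < C₀) (hβ : (2 : ℝ) ^ n < βd) : 0 ≤ Dc d n C₀ βd := by
  have hG := Tc_nonneg (d := d) hC₀ hβ
  unfold Dc; positivity

lemma mean_diff (hd : 1 ≤ d) (hC₀ : 0 < C₀) (hg : GrowthBound μ n C₀) (hβ : (2 : ℝ) ^ n < βd)
    (g : Euc d → ℝ) (C : ℝ≥0∞) (hC : RBMOBoundWith μ n βd g C) (Q R : CubeOf μ) (h : Q.set ⊆ R.set) :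
    ENNReal.ofReal |mQ μ (Q.tilde βd) g - mQ μ (R.tilde βd) g| ≤
      C * ENNReal.ofReal (Dc d n C₀ βd * Kcoef n Q R) := by
  obtain ⟨P, hP, h1, h2, h3, h4⟩ := common hd hC₀ hg hβ Q R h
  have a1 := hC.2 _ _ h1 (tilde_doubling hd hC₀ hg hβ Q) hP
  have a2 := hC.2 _ _ h2 (tilde_doubling hd hC₀ hg hβ R) hP
  have kk := one_le_K (n := n) Q R
  have k1 := one_le_K (n := n) (Q.tilde βd) P
  have k2 := one_le_K (n := n) (R.tilde βd) P
  have hT := Tc_nonneg (d := d) hC₀ hβ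
  calc _ ≤ ENNReal.ofReal (|mQ μ (Q.tilde βd) g - mQ μ P g| + |mQ μ (R.tilde βd) g - mQ μ P g|) := by
        apply ENNReal.ofReal_le_ofReal
        rw [abs_sub_comm (mQ μ (R.tilde βd) g)]
        exact abs_sub_le _ _ _
    _ ≤ C * ENNReal.ofReal (Kcoef n (Q.tilde βd) P) + C * ENNReal.ofReal (Kcoef n (R.tilde βd) P) := by
        rw [ENNReal.ofReal_add (abs_nonneg _) (abs_nonneg _)]
        exact add_le_add a1 a2
    _ = C * ENNReal.ofReal (Kcoef n (Q.tilde βd) P + Kcoef n (R.tilde βd) P) := by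
        rw [← mul_add, ENNReal.ofReal_add (by linarith) (by linarith)]
    _ ≤ _ := by
        gcongr
        unfold Dc
        have : 0 ≤ 4 ^ n * (Tc d n C₀ βd + 2 * (C₀ * d ^ n)) + (1 + Tc d n C₀ βd + C₀ * d ^ n) := by
          positivity
        nlinarith [mul_le_mul_of_nonneg_left kk this]

lemma atom_int (hd : 1 ≤ d) (hC₀ : 0 < C₀) (hg : GrowthBound μ n C₀) (hβ : (2 : ℝ) ^ n < βd)
    (g : Euc d → ℝ)
    (C : ℝ≥0∞) (hC : RBMOBoundWith μ n βd g C) (Q R : CubeOf μ) (h : Q.set ⊆ R.set)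
    (a : Euc d → ℝ) (hs : ∀ x ∉ Q.set, a x = 0)
    (hb : eLpNorm a ⊤ μ ≤ (μ (Q.dil 2) * ENNReal.ofReal (Kcoef n Q R))⁻¹) :
    ∫⁻ x, ‖a x * (g x - mQ μ (R.tilde βd) g)‖ₑ ∂μ ≤ ENNReal.ofReal (1 + Dc d n C₀ βd) * C := by
  have kk := one_le_K (n := n) Q R
  have hD := Dc_nonneg (d := d) hC₀ hβ
  have m0 : μ (Q.dil 2) ≠ 0 := by rw [dil_two]; exact (measure_pos _).ne'
  have mt : μ (Q.dil 2) ≠ ⊤ := by rw [dil_two]; exact (measure_lt_top hd hC₀ hg _).ne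
  set W := μ (Q.dil 2) * ENNReal.ofReal (Kcoef n Q R) with hW
  have W0 : W ≠ 0 := mul_ne_zero m0 (by simp; linarith)
  have Wt : W ≠ ⊤ := ENNReal.mul_ne_top mt ENNReal.ofReal_ne_top
  set cR := mQ μ (R.tilde βd) g with hcR
  set cQ := mQ μ (Q.tilde βd) g with hcQ
  have hae : ∀ᵐ x ∂μ, ‖a x‖ₑ ≤ W⁻¹ := by
    rw [eLpNorm_exponent_top] at hb
    filter_upwards [enorm_ae_le_eLpNormEssSup a μ] with x hx
    exact hx.trans hb
  have e1 : ∫⁻ x, ‖a x * (g x - cR)‖ₑ ∂μ ≤ ∫⁻ x in Q.set, W⁻¹ * ENNReal.ofReal |g x - cR| ∂μ := by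
    rw [← lintegral_indicator Q.set_meas]
    refine lintegral_mono_ae ?_
    filter_upwards [hae] with x hx
    by_cases hxQ : x ∈ Q.set
    · rw [Set.indicator_of_mem hxQ, enorm_mul, ← Real.enorm_eq_ofReal_abs]
      gcongr
    · simp [hs x hxQ]
  refine e1.trans ?_
  rw [lintegral_const_mul' _ _ (ENNReal.inv_ne_top.2 W0)]
  have e2 : ∫⁻ x in Q.set, ENNReal.ofReal |g x - cR| ∂μ ≤
      C * μ (Q.dil 2) + C * ENNReal.ofReal (Dc d n C₀ βd * Kcoef n Q R) * μ Q.set := by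
    calc _ ≤ ∫⁻ x in Q.set, (ENNReal.ofReal |g x - cQ| + ENNReal.ofReal |cQ - cR|) ∂μ := by
          refine lintegral_mono fun x => ?_
          rw [← ENNReal.ofReal_add (abs_nonneg _) (abs_nonneg _)]
          exact ENNReal.ofReal_le_ofReal (abs_sub_le _ _ _)
      _ = ∫⁻ x in Q.set, ENNReal.ofReal |g x - cQ| ∂μ + ENNReal.ofReal |cQ - cR| * μ Q.set := by
          rw [lintegral_add_right _ measurable_const, setLIntegral_const]
      _ ≤ _ := by
          gcongr
          · exact hC.1 Q
          · exact mean_diff hd hC₀ hg hβ g C hC Q R h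
  have e3 : C * μ (Q.dil 2) + C * ENNReal.ofReal (Dc d n C₀ βd * Kcoef n Q R) * μ Q.set ≤
      W * (ENNReal.ofReal (1 + Dc d n C₀ βd) * C) := by
    rw [ENNReal.ofReal_add zero_le_one hD, ENNReal.ofReal_mul hD, ENNReal.ofReal_one]
    calc _ ≤ C * (μ (Q.dil 2) * ENNReal.ofReal (Kcoef n Q R)) +
          C * (ENNReal.ofReal (Dc d n C₀ βd) * ENNReal.ofReal (Kcoef n Q R)) * μ (Q.dil 2) := by
          gcongr
          · exact le_mul_of_one_le_right (zero_le) (by simpa using kk)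
          · exact Q.set_subset_dil
      _ = _ := by rw [hW]; ring
  calc _ ≤ W⁻¹ * (W * (ENNReal.ofReal (1 + Dc d n C₀ βd) * C)) := by
        gcongr; exact e2.trans e3
    _ = _ := by rw [← mul_assoc, ENNReal.inv_mul_cancel W0 Wt, one_mul]

lemma upper (hd : 1 ≤ d) (hC₀ : 0 < C₀) (hg : GrowthBound μ n C₀) (hβ : (2 : ℝ) ^ n < βd)
    (g : Euc d → ℝ) (hgm : AEStronglyMeasurable g μ)
    (C : ℝ≥0∞) (hC : RBMOBoundWith μ n βd g C) :
    Sd μ n g ≤ ENNReal.ofReal (1 + Dc d n C₀ βd) * C := by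
  refine iSup₂_le fun B hB => ?_
  by_cases hbi : Integrable (fun x => B.b x * g x) μ
  swap
  · rw [integral_undef hbi]; simp
  set cR := mQ μ (B.R.tilde βd) g with hcR
  have e1 : ∫ x, B.b x * g x ∂μ = ∫ x, B.b x * (g x - cR) ∂μ := by
    have : ∀ x, B.b x * (g x - cR) = B.b x * g x - B.b x * cR := fun x => by ring
    simp only [this]
    rw [integral_sub hbi (B.integrable.mul_const _), integral_mul_const, B.int_zero]
    simp
  rw [e1, ← Real.enorm_eq_ofReal_abs]
  calc _ ≤ ∫⁻ x, ‖B.b x * (g x - cR)‖ₑ ∂μ := enorm_integral_le_lintegral_enorm _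
    _ ≤ ∫⁻ x, ∑' j, ‖B.lam j‖ₑ * ‖B.a j x * (g x - cR)‖ₑ ∂μ := by
        refine lintegral_mono_ae ?_
        filter_upwards [B.b_eq] with x hx
        have hx2 := hx.mul_right (g x - cR)
        rw [← hx2.tsum_eq]
        refine enorm_tsum_le_tsum_enorm.trans (le_of_eq ?_)
        refine tsum_congr fun j => ?_
        rw [mul_assoc, enorm_mul]
    _ = ∑' j, ‖B.lam j‖ₑ * ∫⁻ x, ‖B.a j x * (g x - cR)‖ₑ ∂μ := by
        rw [lintegral_tsum]
        · congr 1
          ext j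
          rw [lintegral_const_mul' _ _ enorm_ne_top]
        · intro j
          exact ((B.a_meas j).mul (hgm.sub aestronglyMeasurable_const)).enorm.const_mul _
    _ ≤ ∑' j, ‖B.lam j‖ₑ * (ENNReal.ofReal (1 + Dc d n C₀ βd) * C) := by
        gcongr with j
        exact atom_int hd hC₀ hg hβ g C hC _ _ (B.Qj_sub j) _ (B.a_supp j) (B.a_bound j)
    _ = (∑' j, ‖B.lam j‖ₑ) * (ENNReal.ofReal (1 + Dc d n C₀ βd) * C) := ENNReal.tsum_mul_right
    _ ≤ 1 * (ENNReal.ofReal (1 + Dc d n C₀ βd) * C) := by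
        gcongr
        have : ∑' j, ‖B.lam j‖ₑ = ENNReal.ofReal (∑' j, |B.lam j|) := by
          rw [ENNReal.ofReal_tsum_of_nonneg (fun _ => abs_nonneg _) B.lam_summable]
          simp only [Real.enorm_eq_ofReal_abs]
        rw [this]
        exact ENNReal.ofReal_le_one.2 hB
    _ = _ := one_mul _

end CubeOf

/-- Lemma 4.5: for `g ∈ RBMO(μ)`, the norm of the functional `L_g` on
`H^{1,∞}_atb(μ)` is comparable to `‖g‖_*`. -/
theorem statement9 (d n : ℕ) (hn : 1 ≤ n) (hnd : n ≤ d) (C₀ βd : ℝ)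
    (hC₀ : 0 < C₀) (hβ : (2 : ℝ) ^ n < βd) :
    ∃ C : ℝ, 0 < C ∧ ∀ μ : MeasureTheory.Measure (Euc d), GrowthBound μ n C₀ →
      SmallDoublingAE μ βd →
      ∀ g : Euc d → ℝ, MeasureTheory.LocallyIntegrable g μ → rbmoNorm μ n βd g < ⊤ →
        rbmoNorm μ n βd g ≤ ENNReal.ofReal C *
          (⨆ (B : AtomicBlock μ n) (_ : B.size ≤ 1),
            ENNReal.ofReal |∫ x, B.b x * g x ∂μ|) ∧
        (⨆ (B : AtomicBlock μ n) (_ : B.size ≤ 1),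
            ENNReal.ofReal |∫ x, B.b x * g x ∂μ|) ≤
          ENNReal.ofReal C * rbmoNorm μ n βd g := by
  have hd : 1 ≤ d := hn.trans hnd
  have hb : 0 < βd := lt_trans (by positivity) hβ
  have hG := CubeOf.Gc_nonneg (d := d) hC₀ hβ
  have hD := CubeOf.Dc_nonneg (d := d) hC₀ hβ
  refine ⟨(1 + CubeOf.Gc d n C₀ βd + C₀ * d ^ n + βd + βd * (1 + C₀ * d ^ n)) +
    (1 + CubeOf.Dc d n C₀ βd), by positivity, ?_⟩
  intro μ hg _ g hgi _
  change _ ≤ _ * CubeOf.Sd μ n g ∧ CubeOf.Sd μ n g ≤ _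
  constructor
  · have h0 : rbmoNorm μ n βd g ≤ _ := sInf_le (Set.mem_ofPred.2 (CubeOf.lower hd hC₀ hg hβ g hgi))
    refine h0.trans (mul_le_mul_left (ENNReal.ofReal_le_ofReal ?_) _)
    linarith
  · have h1 : CubeOf.Sd μ n g / ENNReal.ofReal (1 + CubeOf.Dc d n C₀ βd) ≤ rbmoNorm μ n βd g := by
      refine le_sInf fun C hC => ?_
      exact ENNReal.div_le_of_le_mul'
        (CubeOf.upper hd hC₀ hg hβ g hgi.aestronglyMeasurable C hC)
    rw [ENNReal.div_le_iff (by simp; linarith) ENNReal.ofReal_ne_top, mul_comm] at h1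
    refine h1.trans (mul_le_mul_left (ENNReal.ofReal_le_ofReal ?_) _)
    have : 0 ≤ 1 + CubeOf.Gc d n C₀ βd + C₀ * d ^ n + βd + βd * (1 + C₀ * d ^ n) := by positivity
    linarith
end
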